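/- arXiv:math/0504347 — 9 statements merged into one kernel-verified Lean document; each statement's English description precedes it below -/
import Mathlib

section
/- Let s : V → U be a solution of the reduced Lie system for α. Then α is a Poisson structure on U: for every x ∈ U the matrix α(x) = (α^{ij}(x)) is skew-symmetric, and for all indices i, j, k the Jacobi identity Σ_{u=1}^d ( α^{iu}(x) ∂α^{jk}/∂x_u (x) + α^{ju}(x) ∂α^{ki}/∂x_u (x) + α^{ku}(x) ∂α^{ij}/∂x_u (x) ) = 0 holds for every x ∈ U. -/
/-!
The bracket `{F, G}` at `z` only depends on the differentials `DF z`, `DG z`, and equals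
`DG z (X_F)`, where `X_F` is the Hamiltonian vector of `F` at `z` (`ham`, `pb_eq`).

Skew-symmetry of `α` at `x` is skew-symmetry of the bracket at `(0, x)`, as `s (0, x) = x`.

Differentiating the bracket gives
`{F, {G, H}} = -D²G (X_F, X_H) + D²H (X_F, X_G)`, and by symmetry of the second
derivatives the cyclic sum of the right-hand side vanishes (`jacobi_pb`). On the other hand,
`{s^j, s^k} = α^{jk} ∘ s` near `(0, x)`, so the chain rule gives
`{s^i, {s^j, s^k}} = ∑ u, α^{iu} ∂_u α^{jk}` there (`pb_comp`). Together these two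
facts give the Jacobi identity for `α` at `x`.
-/

noncomputable section

/-- Standard basis vector `e_u` of `ℝ^d`. -/
def e (d : ℕ) (u : Fin d) : Fin d → ℝ := Pi.single u 1

/-- Canonical Poisson bracket on `ℝ^d × ℝ^d` (points written `(p, x)`):
`{F,G}_ω = Σ_u (∂F/∂x_u ∂G/∂p_u − ∂F/∂p_u ∂G/∂x_u)`. -/
def pb (d : ℕ) (F G : (Fin d → ℝ) × (Fin d → ℝ) → ℝ)
    (z : (Fin d → ℝ) × (Fin d → ℝ)) : ℝ :=
  ∑ u : Fin d,
    (fderiv ℝ F z (0, e d u) * fderiv ℝ G z (e d u, 0)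
      - fderiv ℝ F z (e d u, 0) * fderiv ℝ G z (0, e d u))

/-- Hamiltonian vector of a covector `L`: `∑ u, (L_{x_u} ∂/∂p_u - L_{p_u} ∂/∂x_u)`. It is
the vector that represents the functional `M ↦ {L, M}` for the canonical bivector. -/
def ham (d : ℕ) (L : (Fin d → ℝ) × (Fin d → ℝ) →L[ℝ] ℝ) : (Fin d → ℝ) × (Fin d → ℝ) :=
  ∑ u : Fin d, (L (0, e d u) • ((e d u, 0) : (Fin d → ℝ) × (Fin d → ℝ))
    - L (e d u, 0) • ((0, e d u) : (Fin d → ℝ) × (Fin d → ℝ)))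

lemma apply_ham (d : ℕ) (L M : (Fin d → ℝ) × (Fin d → ℝ) →L[ℝ] ℝ) :
    M (ham d L) = ∑ u : Fin d, (L (0, e d u) * M (e d u, 0) - L (e d u, 0) * M (0, e d u)) := by
  simp only [ham, map_sum, map_sub, map_smul, smul_eq_mul]

lemma apply_ham_skew (d : ℕ) (L M : (Fin d → ℝ) × (Fin d → ℝ) →L[ℝ] ℝ) :
    M (ham d L) = - L (ham d M) := by
  rw [apply_ham, apply_ham, ← Finset.sum_neg_distrib]
  exact Finset.sum_congr rfl fun u _ => by ring

lemma pb_eq (d : ℕ) (F G : (Fin d → ℝ) × (Fin d → ℝ) → ℝ) (z : (Fin d → ℝ) × (Fin d → ℝ)) :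
    pb d F G z = fderiv ℝ G z (ham d (fderiv ℝ F z)) := by
  rw [apply_ham, pb]

/-- Leibniz rule for the bracket: its differential along `v` is
`{∂_v G, H} + {G, ∂_v H}`, written with Hamiltonian vectors. -/
lemma fderiv_pb (d : ℕ) (G H : (Fin d → ℝ) × (Fin d → ℝ) → ℝ) (z v : (Fin d → ℝ) × (Fin d → ℝ))
    (hG : DifferentiableAt ℝ (fderiv ℝ G) z) (hH : DifferentiableAt ℝ (fderiv ℝ H) z) :
    fderiv ℝ (pb d G H) z v =
      - fderiv ℝ (fderiv ℝ G) z v (ham d (fderiv ℝ H z))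
        + fderiv ℝ (fderiv ℝ H) z v (ham d (fderiv ℝ G z)) := by
  have hd (F : (Fin d → ℝ) × (Fin d → ℝ) → ℝ) (hF : DifferentiableAt ℝ (fderiv ℝ F) z)
      (w : (Fin d → ℝ) × (Fin d → ℝ)) :
      HasFDerivAt (fun y => fderiv ℝ F y w) ((fderiv ℝ (fderiv ℝ F) z).flip w) z := by
    simpa using hF.hasFDerivAt.clm_apply (hasFDerivAt_const w z)
  have key := HasFDerivAt.fun_sum (u := Finset.univ) fun (u : Fin d) _ =>
    ((hd G hG (0, e d u)).mul (hd H hH (e d u, 0))).sub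
      ((hd G hG (e d u, 0)).mul (hd H hH (0, e d u)))
  have key' : fderiv ℝ (pb d G H) z = _ := HasFDerivAt.fderiv key
  rw [key', ← apply_ham_skew, apply_ham, apply_ham, ← Finset.sum_add_distrib]
  simp only [_root_.sum_apply, _root_.sub_apply, _root_.add_apply, _root_.smul_apply,
    smul_eq_mul, ContinuousLinearMap.flip_apply]
  exact Finset.sum_congr rfl fun u _ => by ring

/-- Jacobi identity for the canonical Poisson bracket. -/
lemma jacobi_pb (d : ℕ) (F G H : (Fin d → ℝ) × (Fin d → ℝ) → ℝ) (z : (Fin d → ℝ) × (Fin d → ℝ))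
    (hF : ContDiffAt ℝ 2 F z) (hG : ContDiffAt ℝ 2 G z) (hH : ContDiffAt ℝ 2 H z) :
    pb d F (pb d G H) z + pb d G (pb d H F) z + pb d H (pb d F G) z = 0 := by
  have hdiff {K : (Fin d → ℝ) × (Fin d → ℝ) → ℝ} (hK : ContDiffAt ℝ 2 K z) :
      DifferentiableAt ℝ (fderiv ℝ K) z :=
    (hK.fderiv_right (m := 1) (by norm_num)).differentiableAt (by norm_num)
  have hsymm {K : (Fin d → ℝ) × (Fin d → ℝ) → ℝ} (hK : ContDiffAt ℝ 2 K z)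
      (v w : (Fin d → ℝ) × (Fin d → ℝ)) :
      fderiv ℝ (fderiv ℝ K) z v w = fderiv ℝ (fderiv ℝ K) z w v :=
    (hK.isSymmSndFDerivAt (by simp)) v w
  rw [pb_eq, pb_eq d G, pb_eq d H,
    fderiv_pb d G H z _ (hdiff hG) (hdiff hH), fderiv_pb d H F z _ (hdiff hH) (hdiff hF),
    fderiv_pb d F G z _ (hdiff hF) (hdiff hG),
    hsymm hF (ham d (fderiv ℝ H z)), hsymm hG (ham d (fderiv ℝ H z)),
    hsymm hH (ham d (fderiv ℝ G z))]
  ring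

/-- Chain rule `{F, g ∘ s} = ∑ u, {F, s^u} (∂_u g ∘ s)`. -/
lemma pb_comp (d : ℕ) (F : (Fin d → ℝ) × (Fin d → ℝ) → ℝ) (g : (Fin d → ℝ) → ℝ)
    (s : (Fin d → ℝ) × (Fin d → ℝ) → Fin d → ℝ) (z : (Fin d → ℝ) × (Fin d → ℝ))
    (hs : ∀ i, DifferentiableAt ℝ (fun w => s w i) z) (hg : DifferentiableAt ℝ g (s z)) :
    pb d F (fun w => g (s w)) z =
      ∑ u : Fin d, pb d F (fun w => s w u) z * fderiv ℝ g (s z) (e d u) := by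
  have hs' : HasFDerivAt s (ContinuousLinearMap.pi fun i => fderiv ℝ (fun w => s w i) z) z :=
    hasFDerivAt_pi.2 fun i => (hs i).hasFDerivAt
  have hc : fderiv ℝ (fun w => g (s w)) z = _ := (hg.hasFDerivAt.comp z hs').fderiv
  rw [pb_eq, hc, ContinuousLinearMap.comp_apply]
  conv_lhs => rw [pi_eq_sum_univ'
    ((ContinuousLinearMap.pi fun i => fderiv ℝ (fun w => s w i) z) (ham d (fderiv ℝ F z)))]
  rw [map_sum]
  refine Finset.sum_congr rfl fun u _ => ?_
  rw [map_smul, smul_eq_mul, pb_eq, ContinuousLinearMap.coe_pi']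
  congr 2

/-- A solution of the reduced Lie system for `α` forces `α` to be a Poisson
structure on `U`: skew-symmetry and the Jacobi identity. -/
theorem reduced_lie_system_gives_poisson
    (d : ℕ) (hd : 1 ≤ d)
    (U : Set (Fin d → ℝ)) (hU : IsOpen U)
    (V : Set ((Fin d → ℝ) × (Fin d → ℝ))) (hV : IsOpen V)
    (hUV : ∀ x ∈ U, ((0 : Fin d → ℝ), x) ∈ V)
    (α : (Fin d → ℝ) → Fin d → Fin d → ℝ)
    (hα : ∀ i j, ContDiffOn ℝ (⊤ : ℕ∞) (fun x => α x i j) U)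
    (s : (Fin d → ℝ) × (Fin d → ℝ) → Fin d → ℝ)
    (hs : ∀ i, ContDiffOn ℝ (⊤ : ℕ∞) (fun z => s z i) V)
    (hsU : ∀ z ∈ V, s z ∈ U)
    (hbr : ∀ i j, ∀ z ∈ V,
      pb d (fun w => s w i) (fun w => s w j) z = α (s z) i j)
    (hinit : ∀ x ∈ U, s (0, x) = x)
    (hnd : ∀ z ∈ V,
      (Matrix.of (fun i j => fderiv ℝ (fun w => s w i) z (0, e d j))).det ≠ 0) :
    ∀ x ∈ U,
      (∀ i j, α x i j = - α x j i) ∧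
      (∀ i j k, ∑ u : Fin d,
          (α x i u * fderiv ℝ (fun y => α y j k) x (e d u)
            + α x j u * fderiv ℝ (fun y => α y k i) x (e d u)
            + α x k u * fderiv ℝ (fun y => α y i j) x (e d u)) = 0) := by
  intro x hx
  have hz := hUV x hx
  have hVz := hV.mem_nhds hz
  have hsx := hinit x hx
  have hs2 (i : Fin d) : ContDiffAt ℝ 2 (fun z => s z i) (0, x) :=
    ((hs i).contDiffAt hVz).of_le (WithTop.coe_le_coe.2 (le_top : (2 : ℕ∞) ≤ ⊤))
  have hsd (i : Fin d) : DifferentiableAt ℝ (fun z => s z i) (0, x) :=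
    (hs2 i).differentiableAt (by norm_num)
  have hαd (i j : Fin d) : DifferentiableAt ℝ (fun y => α y i j) x :=
    ((hα i j).contDiffAt (hU.mem_nhds hx)).differentiableAt (by simp)
  have hb (i j : Fin d) : pb d (fun w => s w i) (fun w => s w j) (0, x) = α x i j := by
    rw [hbr i j _ hz, hsx]
  refine ⟨fun i j => ?_, fun i j k => ?_⟩
  · rw [← hb, ← hb, pb_eq, pb_eq, apply_ham_skew]
  · have hnest (i j k : Fin d) :
        pb d (fun w => s w i) (pb d (fun w => s w j) (fun w => s w k)) (0, x) =
          ∑ u : Fin d, α x i u * fderiv ℝ (fun y => α y j k) x (e d u) := by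
      -- The outer bracket only sees the germ of the inner one, which is `α^{jk} ∘ s`.
      have heq : pb d (fun w => s w j) (fun w => s w k) =ᶠ[nhds (0, x)]
          fun w => (fun y => α y j k) (s w) := by
        filter_upwards [hVz] with w hw using hbr j k w hw
      rw [pb_eq, heq.fderiv_eq, ← pb_eq,
        pb_comp d _ (fun y => α y j k) s _ hsd (by rw [hsx]; exact hαd j k), hsx]
      exact Finset.sum_congr rfl fun u _ => by rw [hb]
    rw [Finset.sum_add_distrib, Finset.sum_add_distrib, ← hnest, ← hnest, ← hnest]
    exact jacobi_pb d _ _ _ _ (hs2 i) (hs2 j) (hs2 k)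
end
end

section
/- Let s : V → U be a solution of the reduced Lie system for α, let f : U → ℝ be smooth, and set H := f∘s : V → ℝ. Let I ⊆ ℝ be an interval and (p, q) : I → V a differentiable curve satisfying Hamilton's equations ṗ_u(τ) = −(∂H/∂x_u)(p(τ),q(τ)) and q̇_u(τ) = (∂H/∂p_u)(p(τ),q(τ)) for u = 1,…,d. Then the curve X(τ) := s(p(τ), q(τ)) solves the Hamilton–Poisson system Ẋ^i(τ) = Σ_{j=1}^d α^{ij}(X(τ)) (∂f/∂x_j)(X(τ)) for i = 1,…,d. -/
/-!
Along a Hamiltonian trajectory every observable evolves by its Poisson bracket with `H`, so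
`Ẋ^i = {s^i, H}_ω`. By the chain rule for `H = f ∘ s`, the bracket is a derivation in its second
argument, `{s^i, f ∘ s}_ω = ∑ j, {s^i, s^j}_ω (∂f/∂x_j ∘ s)`, and the reduced Lie system replaces
`{s^i, s^j}_ω` by `α^{ij} ∘ s`. The coordinate expansions `clm_eq_sum` and `clm_prod_eq_sum` turn
Fréchet derivatives into the partial derivatives in which the bracket is written.
-/

noncomputable section

/-- A linear functional on `ℝ^d`, expanded in the standard basis. -/
lemma clm_eq_sum (d : ℕ) (L : (Fin d → ℝ) →L[ℝ] ℝ) (v : Fin d → ℝ) :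
    L v = ∑ u, v u * L (e d u) := by
  conv_lhs => rw [pi_eq_sum_univ' v]
  simp only [map_sum, map_smul, smul_eq_mul]
  refine Finset.sum_congr rfl fun u _ => ?_
  congr 2

/-- A linear functional on phase space, expanded in the `p`- and `x`-directions. -/
lemma clm_prod_eq_sum (d : ℕ) (L : (Fin d → ℝ) × (Fin d → ℝ) →L[ℝ] ℝ) (v w : Fin d → ℝ) :
    L (v, w) = ∑ u, (v u * L (e d u, 0) + w u * L (0, e d u)) := by
  have h : L (v, w) = L.comp (ContinuousLinearMap.inl ℝ _ _) v
      + L.comp (ContinuousLinearMap.inr ℝ _ _) w := by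
    simp [← map_add]
  rw [h, clm_eq_sum, clm_eq_sum, ← Finset.sum_add_distrib]
  simp

/-- A solution `(p(τ), q(τ))` of Hamilton's equations on `V` with Hamiltonian
`H = f∘s` projects, via `X(τ) = s(p(τ), q(τ))`, to a solution of the
Hamilton–Poisson system `Ẋ^i = Σ_j α^{ij}(X) ∂f/∂x_j(X)` on `U`. -/
theorem hamiltonian_lift_projects_to_poisson_system
    (d : ℕ) (hd : 1 ≤ d)
    (U : Set (Fin d → ℝ)) (hU : IsOpen U)
    (V : Set ((Fin d → ℝ) × (Fin d → ℝ))) (hV : IsOpen V)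
    (hUV : ∀ x ∈ U, ((0 : Fin d → ℝ), x) ∈ V)
    (α : (Fin d → ℝ) → Fin d → Fin d → ℝ)
    (hα : ∀ i j, ContDiffOn ℝ (⊤ : ℕ∞) (fun x => α x i j) U)
    (s : (Fin d → ℝ) × (Fin d → ℝ) → Fin d → ℝ)
    (hs : ∀ i, ContDiffOn ℝ (⊤ : ℕ∞) (fun z => s z i) V)
    (hsU : ∀ z ∈ V, s z ∈ U)
    (hbr : ∀ i j, ∀ z ∈ V,
      pb d (fun w => s w i) (fun w => s w j) z = α (s z) i j)
    (hinit : ∀ x ∈ U, s (0, x) = x)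
    (hnd : ∀ z ∈ V,
      (Matrix.of (fun i j => fderiv ℝ (fun w => s w i) z (0, e d j))).det ≠ 0)
    (f : (Fin d → ℝ) → ℝ) (hf : ContDiffOn ℝ (⊤ : ℕ∞) f U)
    (I : Set ℝ) (hI : Convex ℝ I)
    (p q : ℝ → Fin d → ℝ)
    (hcurve : ∀ τ ∈ I, (p τ, q τ) ∈ V)
    -- Hamilton's equations: ṗ_u = −∂H/∂x_u, q̇_u = ∂H/∂p_u, with H = f∘s
    (hp : ∀ τ ∈ I, ∀ u : Fin d, HasDerivAt (fun σ => p σ u)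
      (-(fderiv ℝ (fun z => f (s z)) (p τ, q τ) (0, e d u))) τ)
    (hq : ∀ τ ∈ I, ∀ u : Fin d, HasDerivAt (fun σ => q σ u)
      (fderiv ℝ (fun z => f (s z)) (p τ, q τ) (e d u, 0)) τ) :
    ∀ τ ∈ I, ∀ i : Fin d, HasDerivAt (fun σ => s (p σ, q σ) i)
      (∑ j : Fin d, α (s (p τ, q τ)) i j * fderiv ℝ f (s (p τ, q τ)) (e d j)) τ := by
  intro τ hτ i
  set z := (p τ, q τ) with hz
  have hzV : z ∈ V := hcurve τ hτ
  have hsd : ∀ j, DifferentiableAt ℝ (fun w => s w j) z := fun j =>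
    ((hs j).contDiffAt (hV.mem_nhds hzV)).differentiableAt (by simp)
  have hfd : DifferentiableAt ℝ f (s z) :=
    (hf.contDiffAt (hU.mem_nhds (hsU z hzV))).differentiableAt (by simp)
  -- Chain rule: `∂(f ∘ s) = ∑ j, ∂_j f · ∂s^j`.
  have hH : ∀ w, fderiv ℝ (fun z => f (s z)) z w
      = ∑ j, fderiv ℝ (fun w => s w j) z w * fderiv ℝ f (s z) (e d j) := by
    intro w
    have h1 : HasFDerivAt s (ContinuousLinearMap.pi fun j => fderiv ℝ (fun w => s w j) z) z :=
      hasFDerivAt_pi.2 fun j => (hsd j).hasFDerivAt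
    have h2 : HasFDerivAt (fun z => f (s z)) _ z := hfd.hasFDerivAt.comp z h1
    rw [h2.fderiv, ContinuousLinearMap.comp_apply, clm_eq_sum]
    rfl
  have hγ : HasDerivAt (fun σ => (p σ, q σ))
      ((fun u => -(fderiv ℝ (fun z => f (s z)) z (0, e d u))),
        (fun u => fderiv ℝ (fun z => f (s z)) z (e d u, 0))) τ :=
    (hasDerivAt_pi.2 (hp τ hτ)).prodMk (hasDerivAt_pi.2 (hq τ hτ))
  have hX : HasDerivAt (fun σ => s (p σ, q σ) i) _ τ :=
    HasFDerivAt.comp_hasDerivAt (l := fun w => s w i) τ (hsd i).hasFDerivAt hγ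
  refine hX.congr_deriv ?_
  rw [clm_prod_eq_sum]
  simp only [hH, ← hbr _ _ z hzV, pb, Finset.sum_mul, ← Finset.sum_neg_distrib,
    ← Finset.sum_add_distrib]
  rw [Finset.sum_comm]
  refine Finset.sum_congr rfl fun j _ => Finset.sum_congr rfl fun u _ => ?_
  ring
end
end

section
/- Let s : V → U be a solution of the reduced Lie system for α and let t = (t^1,…,t^d) : V → ℝ^d be smooth with {s^i, t^j}_ω = 0 on V for all i, j. Let f : U → ℝ be smooth, H := f∘s, and let (p, q) : I → V be a differentiable curve on an interval I solving Hamilton's equations ṗ_u = −∂H/∂x_u, q̇_u = ∂H/∂p_u. Then for each j the function τ ↦ t^j(p(τ), q(τ)) is constant on I; that is, t^1,…,t^d are d constants of motion of the lifted Hamiltonian system. -/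
/-!
By the chain rule `dH = Σ_i (∂f/∂y_i)(s) ds^i`, so the bracket `{f∘s, G}_ω` is the combination
`Σ_i (∂f/∂y_i)(s) {s^i, G}_ω` (`pb_comp_eq_sum`), which vanishes for `G = t^j`. Along a solution of
Hamilton's equations the derivative of `t^j` is `-{H, t^j}_ω`
(`hasDerivAt_comp_hamiltonian_curve`), so it is zero, and a function with zero derivative on a
convex set of reals is constant there.
-/

noncomputable section

lemma clm_apply_eq_sum (d : ℕ) (L : (Fin d → ℝ) →L[ℝ] ℝ) (a : Fin d → ℝ) :
    L a = ∑ u, a u * L (e d u) := by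
  conv_lhs => rw [pi_eq_sum_univ' a]
  simp only [map_sum, map_smul, smul_eq_mul]
  refine Finset.sum_congr rfl fun u _ => ?_
  congr 2

lemma clm_prod_apply_eq_sum (d : ℕ) (L : (Fin d → ℝ) × (Fin d → ℝ) →L[ℝ] ℝ)
    (a b : Fin d → ℝ) :
    L (a, b) = ∑ u, (a u * L (e d u, 0) + b u * L (0, e d u)) := by
  have h1 := clm_apply_eq_sum d (L.comp (ContinuousLinearMap.inl ℝ _ _)) a
  have h2 := clm_apply_eq_sum d (L.comp (ContinuousLinearMap.inr ℝ _ _)) b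
  simp only [ContinuousLinearMap.comp_apply, ContinuousLinearMap.inl_apply,
    ContinuousLinearMap.inr_apply] at h1 h2
  rw [Finset.sum_add_distrib, ← h1, ← h2, ← map_add]
  simp

/-- The bracket is a derivation in its first argument, in chain-rule form. -/
lemma pb_comp_eq_sum (d : ℕ) (s : (Fin d → ℝ) × (Fin d → ℝ) → Fin d → ℝ)
    (f : (Fin d → ℝ) → ℝ) (G : (Fin d → ℝ) × (Fin d → ℝ) → ℝ)
    (z : (Fin d → ℝ) × (Fin d → ℝ))
    (hs : ∀ i, DifferentiableAt ℝ (fun w => s w i) z) (hf : DifferentiableAt ℝ f (s z)) :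
    pb d (fun w => f (s w)) G z
      = ∑ i, fderiv ℝ f (s z) (e d i) * pb d (fun w => s w i) G z := by
  have hs' : HasFDerivAt s
      (ContinuousLinearMap.pi fun i => fderiv ℝ (fun w => s w i) z) z :=
    hasFDerivAt_pi.2 fun i => (hs i).hasFDerivAt
  have key : ∀ v, fderiv ℝ (fun w => f (s w)) z v
      = ∑ i, fderiv ℝ (fun w => s w i) z v * fderiv ℝ f (s z) (e d i) := by
    intro v
    have h := (hf.hasFDerivAt.comp z hs').fderiv
    change fderiv ℝ (fun w => f (s w)) z = _ at h
    rw [h, ContinuousLinearMap.comp_apply, clm_apply_eq_sum]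
    rfl
  simp only [pb, key, Finset.mul_sum, Finset.sum_mul, ← Finset.sum_sub_distrib]
  rw [Finset.sum_comm]
  refine Finset.sum_congr rfl fun i _ => Finset.sum_congr rfl fun u _ => ?_
  ring

/-- Along a solution of Hamilton's equations an observable `G` has time derivative
`-{H, G}_ω`, in the sign convention of `pb`. -/
lemma hasDerivAt_comp_hamiltonian_curve (d : ℕ)
    (H G : (Fin d → ℝ) × (Fin d → ℝ) → ℝ) (p q : ℝ → Fin d → ℝ) (τ : ℝ)
    (hG : DifferentiableAt ℝ G (p τ, q τ))
    (hp : ∀ u, HasDerivAt (fun σ => p σ u) (-(fderiv ℝ H (p τ, q τ) (0, e d u))) τ)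
    (hq : ∀ u, HasDerivAt (fun σ => q σ u) (fderiv ℝ H (p τ, q τ) (e d u, 0)) τ) :
    HasDerivAt (fun σ => G (p σ, q σ)) (-pb d H G (p τ, q τ)) τ := by
  have hc := (hasDerivAt_pi.2 hp).prodMk (hasDerivAt_pi.2 hq)
  have h := hG.hasFDerivAt.comp_hasDerivAt τ hc
  rw [clm_prod_apply_eq_sum] at h
  refine h.congr_deriv ?_
  simp only [pb, ← Finset.sum_neg_distrib]
  refine Finset.sum_congr rfl fun u _ => ?_
  ring

/-- If `t = (t^1,…,t^d)` Poisson-commutes with the solution `s` of the reduced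
Lie system, `{s^i, t^j}_ω = 0`, then the components `t^j` are constants of
motion of the lifted Hamiltonian system with Hamiltonian `H = f∘s`. -/
theorem t_components_are_constants_of_motion
    (d : ℕ) (hd : 1 ≤ d)
    (U : Set (Fin d → ℝ)) (hU : IsOpen U)
    (V : Set ((Fin d → ℝ) × (Fin d → ℝ))) (hV : IsOpen V)
    (hUV : ∀ x ∈ U, ((0 : Fin d → ℝ), x) ∈ V)
    (α : (Fin d → ℝ) → Fin d → Fin d → ℝ)
    (hα : ∀ i j, ContDiffOn ℝ (⊤ : ℕ∞) (fun x => α x i j) U)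
    (s : (Fin d → ℝ) × (Fin d → ℝ) → Fin d → ℝ)
    (hs : ∀ i, ContDiffOn ℝ (⊤ : ℕ∞) (fun z => s z i) V)
    (hsU : ∀ z ∈ V, s z ∈ U)
    (hbr : ∀ i j, ∀ z ∈ V,
      pb d (fun w => s w i) (fun w => s w j) z = α (s z) i j)
    (hinit : ∀ x ∈ U, s (0, x) = x)
    (hnd : ∀ z ∈ V,
      (Matrix.of (fun i j => fderiv ℝ (fun w => s w i) z (0, e d j))).det ≠ 0)
    (t : (Fin d → ℝ) × (Fin d → ℝ) → Fin d → ℝ)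
    (ht : ∀ j, ContDiffOn ℝ (⊤ : ℕ∞) (fun z => t z j) V)
    (hst : ∀ i j, ∀ z ∈ V, pb d (fun w => s w i) (fun w => t w j) z = 0)
    (f : (Fin d → ℝ) → ℝ) (hf : ContDiffOn ℝ (⊤ : ℕ∞) f U)
    (I : Set ℝ) (hI : Convex ℝ I)
    (p q : ℝ → Fin d → ℝ)
    (hcurve : ∀ τ ∈ I, (p τ, q τ) ∈ V)
    -- Hamilton's equations: ṗ_u = −∂H/∂x_u, q̇_u = ∂H/∂p_u, with H = f∘s
    (hp : ∀ τ ∈ I, ∀ u : Fin d, HasDerivAt (fun σ => p σ u)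
      (-(fderiv ℝ (fun z => f (s z)) (p τ, q τ) (0, e d u))) τ)
    (hq : ∀ τ ∈ I, ∀ u : Fin d, HasDerivAt (fun σ => q σ u)
      (fderiv ℝ (fun z => f (s z)) (p τ, q τ) (e d u, 0)) τ) :
    ∀ j : Fin d, ∀ τ₁ ∈ I, ∀ τ₂ ∈ I,
      t (p τ₁, q τ₁) j = t (p τ₂, q τ₂) j := by
  intro j τ₁ h₁ τ₂ h₂
  have hder : ∀ τ ∈ I, HasDerivAt (fun σ => t (p σ, q σ) j) 0 τ := by
    intro τ hτ
    have hz := hcurve τ hτ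
    have hVn := hV.mem_nhds hz
    have hne : ((⊤ : ℕ∞) : WithTop ℕ∞) ≠ 0 := by simp
    have hzero : pb d (fun w => f (s w)) (fun w => t w j) (p τ, q τ) = 0 := by
      rw [pb_comp_eq_sum d s f _ _
        (fun i => ((hs i).contDiffAt hVn).differentiableAt hne)
        ((hf.contDiffAt (hU.mem_nhds (hsU _ hz))).differentiableAt hne)]
      exact Finset.sum_eq_zero fun i _ => by rw [hst i j _ hz, mul_zero]
    have h := hasDerivAt_comp_hamiltonian_curve d (fun w => f (s w)) (fun w => t w j) p q τ
      (((ht j).contDiffAt hVn).differentiableAt hne) (hp τ hτ) (hq τ hτ)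
    rwa [hzero, neg_zero] at h
  -- mean value inequality with Lipschitz constant `0`
  have hb := hI.norm_image_sub_le_of_norm_hasDerivWithin_le (C := 0)
    (fun τ hτ => (hder τ hτ).hasDerivWithinAt) (fun τ _ => by simp) h₂ h₁
  rw [zero_mul] at hb
  exact sub_eq_zero.1 (norm_le_zero_iff.1 hb)
end
end

section
/- If S satisfies the SGA equation and the SGS conditions on U, then the matrix α(x) = (α^{kl}(x))_{k,l=1}^d defined by α^{kl}(x) := 2 ∂²S/∂p_1^k ∂p_2^l (0,0,x) is a Poisson structure on U: α(x) is skew-symmetric for every x ∈ U and satisfies the Jacobi identity Σ_{u=1}^d ( α^{ku} ∂α^{lm}/∂x_u + α^{lu} ∂α^{mk}/∂x_u + α^{mu} ∂α^{kl}/∂x_u ) = 0 on U for all k, l, m. -/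
/-! Skew-symmetry holds because SGS kills the pure Hessians in `p₁` and in `p₂` and makes `S` constant
on `(p, -p, x)` (`mixed_skew`).

For the Jacobi identity, each side of the SGA equation is stationary in its implicit variables
(`x̄, p̄` on the left, `x̃, p̃` on the right), so its derivative in `p₂` sees only the explicit
`p₂`. At `p₂ = 0` the SGS conditions give `p̄ = p₁` and `p̃ = p₃`, and what remains is the explicit
identity (`sga_identity`)

  `∇_{p₂}S(p, 0, ∇_{p₁}S(p, q, x)) = ∇_{p₁}S(0, q, ∇_{p₂}S(p, q, x))`.

Its mixed derivative in `p^a` and `q^c` at the origin (`third_order_identity`) reads, for the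
component `k`,

  `¼ ∑_u α^{uc} ∂_u α^{ak} + T_{akc} = ¼ ∑_u α^{au} ∂_u α^{kc} + R_{akc}`,

with `T_{akc} = ∂³S/∂p₁^a ∂p₁^k ∂p₂^c` symmetric in `a, k` and `R_{akc} = ∂³S/∂p₁^a ∂p₂^k ∂p₂^c`
symmetric in `k, c`. Antisymmetrising over `a, k, c` removes `T` and `R` and leaves a multiple
of the Jacobi identity.
-/

noncomputable section

/-- The SGS conditions for `S` on the open set `Ω ⊆ ℝ^d × ℝ^d × ℝ^d`:
`S(p,0,x) = S(0,p,x) = p·x` and `S(p,−p,x) = 0` whenever defined. -/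
def SGS (d : ℕ) (Ω : Set ((Fin d → ℝ) × (Fin d → ℝ) × (Fin d → ℝ)))
    (S : (Fin d → ℝ) × (Fin d → ℝ) × (Fin d → ℝ) → ℝ) : Prop :=
  (∀ p x : Fin d → ℝ, (p, (0 : Fin d → ℝ), x) ∈ Ω → S (p, 0, x) = ∑ i, p i * x i) ∧
  (∀ p x : Fin d → ℝ, ((0 : Fin d → ℝ), p, x) ∈ Ω → S (0, p, x) = ∑ i, p i * x i) ∧
  (∀ p x : Fin d → ℝ, (p, -p, x) ∈ Ω → S (p, -p, x) = 0)

/-- The SGA equation for `S` on `U`: on an open neighborhood `W` of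
`{0}×{0}×{0}×U` there are smooth maps `x̄, p̄, x̃, p̃` solving the implicit
equations `x̄ = ∇_{p₁}S(p̄,p₃,x)`, `p̄ = ∇_x S(p₁,p₂,x̄)`,
`x̃ = ∇_{p₂}S(p₁,p̃,x)`, `p̃ = ∇_x S(p₂,p₃,x̃)`, and the additivity equation
`S(p₁,p₂,x̄) + S(p̄,p₃,x) − x̄·p̄ = S(p₂,p₃,x̃) + S(p₁,p̃,x) − x̃·p̃` holds. -/
def SGA (d : ℕ) (U : Set (Fin d → ℝ))
    (Ω : Set ((Fin d → ℝ) × (Fin d → ℝ) × (Fin d → ℝ)))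
    (S : (Fin d → ℝ) × (Fin d → ℝ) × (Fin d → ℝ) → ℝ) : Prop :=
  ∃ (W : Set ((Fin d → ℝ) × (Fin d → ℝ) × (Fin d → ℝ) × (Fin d → ℝ)))
    (barx barp tilx tilp :
      (Fin d → ℝ) × (Fin d → ℝ) × (Fin d → ℝ) × (Fin d → ℝ) → (Fin d → ℝ)),
    IsOpen W ∧
    (∀ x ∈ U, ((0 : Fin d → ℝ), (0 : Fin d → ℝ), (0 : Fin d → ℝ), x) ∈ W) ∧
    ContDiffOn ℝ (⊤ : ℕ∞) barx W ∧ ContDiffOn ℝ (⊤ : ℕ∞) barp W ∧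
    ContDiffOn ℝ (⊤ : ℕ∞) tilx W ∧ ContDiffOn ℝ (⊤ : ℕ∞) tilp W ∧
    ∀ p₁ p₂ p₃ x : Fin d → ℝ, (p₁, p₂, p₃, x) ∈ W →
      (barp (p₁, p₂, p₃, x), p₃, x) ∈ Ω ∧
      (p₁, p₂, barx (p₁, p₂, p₃, x)) ∈ Ω ∧
      (p₁, tilp (p₁, p₂, p₃, x), x) ∈ Ω ∧
      (p₂, p₃, tilx (p₁, p₂, p₃, x)) ∈ Ω ∧
      (∀ k, barx (p₁, p₂, p₃, x) k
        = fderiv ℝ S (barp (p₁, p₂, p₃, x), p₃, x) (e d k, 0, 0)) ∧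
      (∀ k, barp (p₁, p₂, p₃, x) k
        = fderiv ℝ S (p₁, p₂, barx (p₁, p₂, p₃, x)) (0, 0, e d k)) ∧
      (∀ k, tilx (p₁, p₂, p₃, x) k
        = fderiv ℝ S (p₁, tilp (p₁, p₂, p₃, x), x) (0, e d k, 0)) ∧
      (∀ k, tilp (p₁, p₂, p₃, x) k
        = fderiv ℝ S (p₂, p₃, tilx (p₁, p₂, p₃, x)) (0, 0, e d k)) ∧
      (S (p₁, p₂, barx (p₁, p₂, p₃, x)) + S (barp (p₁, p₂, p₃, x), p₃, x)
          - ∑ k, barx (p₁, p₂, p₃, x) k * barp (p₁, p₂, p₃, x) k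
        = S (p₂, p₃, tilx (p₁, p₂, p₃, x)) + S (p₁, tilp (p₁, p₂, p₃, x), x)
          - ∑ k, tilx (p₁, p₂, p₃, x) k * tilp (p₁, p₂, p₃, x) k)

/-- `α^{kl}(x) = 2 ∂²S/∂p₁^k ∂p₂^l (0,0,x)`. -/
def alphaS (d : ℕ) (S : (Fin d → ℝ) × (Fin d → ℝ) × (Fin d → ℝ) → ℝ)
    (x : Fin d → ℝ) (k l : Fin d) : ℝ :=
  2 * fderiv ℝ (fun w => fderiv ℝ S w ((0 : Fin d → ℝ), e d l, (0 : Fin d → ℝ)))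
        ((0 : Fin d → ℝ), (0 : Fin d → ℝ), x) (e d k, 0, 0)

/-! ### Linear algebra and derivatives along curves -/

/-- The space `ℝ^d`, carrying the sup norm of a function type; only its topology matters here. -/
abbrev V (d : ℕ) : Type := Fin d → ℝ

/-- The domain `ℝ^d × ℝ^d × ℝ^d` of the generating function, with coordinates `(p₁, p₂, x)`. -/
abbrev E3 (d : ℕ) : Type := V d × V d × V d

variable {d : ℕ}

lemma apply_fst_eq_sum (L : E3 d →L[ℝ] ℝ) (v : V d) :
    L (v, 0, 0) = ∑ u, v u * L (e d u, 0, 0) := by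
  have h : ((v, 0, 0) : E3 d) = ∑ u, v u • ((e d u, 0, 0) : E3 d) := by
    refine Prod.ext ?_ (Prod.ext ?_ ?_)
    · simpa [e, Prod.fst_sum] using pi_eq_sum_univ' v
    · simp [Prod.snd_sum]
    · simp [Prod.snd_sum]
  rw [h, map_sum]; simp only [map_smul, smul_eq_mul]

lemma apply_snd_eq_sum (L : E3 d →L[ℝ] ℝ) (v : V d) :
    L (0, v, 0) = ∑ u, v u * L (0, e d u, 0) := by
  have h : ((0, v, 0) : E3 d) = ∑ u, v u • ((0, e d u, 0) : E3 d) := by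
    refine Prod.ext ?_ (Prod.ext ?_ ?_)
    · simp [Prod.fst_sum]
    · simpa [e, Prod.fst_sum, Prod.snd_sum] using pi_eq_sum_univ' v
    · simp [Prod.snd_sum]
  rw [h, map_sum]; simp only [map_smul, smul_eq_mul]

lemma apply_trd_eq_sum (L : E3 d →L[ℝ] ℝ) (v : V d) :
    L (0, 0, v) = ∑ u, v u * L (0, 0, e d u) := by
  have h : ((0, 0, v) : E3 d) = ∑ u, v u • ((0, 0, e d u) : E3 d) := by
    refine Prod.ext ?_ (Prod.ext ?_ ?_)
    · simp [Prod.fst_sum]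
    · simp [Prod.fst_sum, Prod.snd_sum]
    · simpa [e, Prod.snd_sum] using pi_eq_sum_univ' v
  rw [h, map_sum]; simp only [map_smul, smul_eq_mul]

lemma hasDerivAt_line {E : Type*} [NormedAddCommGroup E] [NormedSpace ℝ E] (z v : E) (s : ℝ) :
    HasDerivAt (fun t : ℝ => z + t • v) v s := by
  simpa using ((hasDerivAt_id s).smul_const v).const_add z

lemma hasDerivAt_bilin {E : Type*} [NormedAddCommGroup E] [NormedSpace ℝ E]
    {D : E → E →L[ℝ] E →L[ℝ] ℝ} {D' : E →L[ℝ] E →L[ℝ] E →L[ℝ] ℝ} {γ v : ℝ → E} {z' v' : E} {s : ℝ}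
    (hD : HasFDerivAt D D' (γ s)) (hγ : HasDerivAt γ z' s) (hv : HasDerivAt v v' s) (w : E) :
    HasDerivAt (fun t => D (γ t) (v t) w) (D' z' (v s) w + D (γ s) v' w) s := by
  have h1 : HasDerivAt (fun t => D (γ t)) (D' z') s :=
    HasFDerivAt.comp_hasDerivAt (E := E →L[ℝ] E →L[ℝ] ℝ) (l := D) s hD hγ
  have h2 : HasDerivAt (fun t => D (γ t) (v t)) (D' z' (v s) + D (γ s) v') s := h1.clm_apply hv
  exact (h2.clm_apply (hasDerivAt_const s w)).congr_deriv (by rw [map_zero, add_zero]; rfl)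

lemma hasDerivAt_lin {E : Type*} [NormedAddCommGroup E] [NormedSpace ℝ E]
    {D : E → E →L[ℝ] ℝ} {D' : E →L[ℝ] E →L[ℝ] ℝ} {γ : ℝ → E} {z' : E} {s : ℝ}
    (hD : HasFDerivAt D D' (γ s)) (hγ : HasDerivAt γ z' s) (w : E) :
    HasDerivAt (fun t => D (γ t) w) (D' z' w) s := by
  have h1 := (hD.comp_hasDerivAt s hγ).clm_apply (hasDerivAt_const s w)
  simpa using h1

/-- A directional derivative is read off from the values on a line inside an open set. -/
lemma fderiv_apply_eq_of_line {E : Type*} [NormedAddCommGroup E] [NormedSpace ℝ E]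
    {Ω : Set E} (hΩ : IsOpen Ω) {f : E → ℝ} {z v : E} (hz : z ∈ Ω)
    (hf : DifferentiableAt ℝ f z) {m : ℝ} (g : ℝ → ℝ) (hg : HasDerivAt g m 0)
    (h : ∀ t : ℝ, z + t • v ∈ Ω → f (z + t • v) = g t) : fderiv ℝ f z v = m := by
  have hl := hasDerivAt_line z v 0
  have h1 : HasDerivAt (fun t : ℝ => f (z + t • v)) (fderiv ℝ f z v) 0 := by
    have hf' : HasFDerivAt f (fderiv ℝ f z) (z + (0 : ℝ) • v) := by simpa using hf.hasFDerivAt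
    exact hf'.comp_hasDerivAt (0 : ℝ) hl
  have hev : ∀ᶠ t : ℝ in nhds 0, z + t • v ∈ Ω :=
    hl.continuousAt.eventually_mem (hΩ.mem_nhds (by simpa using hz))
  refine h1.unique (hg.congr_of_eventuallyEq ?_)
  filter_upwards [hev] with t ht using h t ht

/-! ### Higher derivatives of the generating function -/

section

variable {Ω : Set (E3 d)} {S : E3 d → ℝ}

lemma contDiffAt_of_mem (hΩ : IsOpen Ω) (hS : ContDiffOn ℝ (⊤ : ℕ∞) S Ω) {z : E3 d}
    (hz : z ∈ Ω) : ContDiffAt ℝ (⊤ : ℕ∞) S z := hS.contDiffAt (hΩ.mem_nhds hz)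

lemma hasFDerivAt_gen (hΩ : IsOpen Ω) (hS : ContDiffOn ℝ (⊤ : ℕ∞) S Ω) {z : E3 d}
    (hz : z ∈ Ω) : HasFDerivAt S (fderiv ℝ S z) z :=
  ((contDiffAt_of_mem hΩ hS hz).differentiableAt (by simp)).hasFDerivAt

lemma contDiffAt_one (hΩ : IsOpen Ω) (hS : ContDiffOn ℝ (⊤ : ℕ∞) S Ω) {z : E3 d}
    (hz : z ∈ Ω) : ContDiffAt ℝ (⊤ : ℕ∞) (fderiv ℝ S) z :=
  (contDiffAt_of_mem hΩ hS hz).fderiv_right (m := (⊤ : ℕ∞)) (by simp)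

lemma contDiffAt_two (hΩ : IsOpen Ω) (hS : ContDiffOn ℝ (⊤ : ℕ∞) S Ω) {z : E3 d}
    (hz : z ∈ Ω) : ContDiffAt ℝ (⊤ : ℕ∞) (fderiv ℝ (fderiv ℝ S)) z :=
  (contDiffAt_one hΩ hS hz).fderiv_right (m := (⊤ : ℕ∞)) (by simp)

lemma hasFDerivAt_gen_fderiv (hΩ : IsOpen Ω) (hS : ContDiffOn ℝ (⊤ : ℕ∞) S Ω) {z : E3 d}
    (hz : z ∈ Ω) : HasFDerivAt (fderiv ℝ S) (fderiv ℝ (fderiv ℝ S) z) z :=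
  ((contDiffAt_one hΩ hS hz).differentiableAt (by simp)).hasFDerivAt

lemma hasFDerivAt_gen_fderiv2 (hΩ : IsOpen Ω) (hS : ContDiffOn ℝ (⊤ : ℕ∞) S Ω) {z : E3 d}
    (hz : z ∈ Ω) :
    HasFDerivAt (fderiv ℝ (fderiv ℝ S)) (fderiv ℝ (fderiv ℝ (fderiv ℝ S)) z) z :=
  ((contDiffAt_two hΩ hS hz).differentiableAt (by simp)).hasFDerivAt

lemma second_symm (hΩ : IsOpen Ω) (hS : ContDiffOn ℝ (⊤ : ℕ∞) S Ω) {z : E3 d}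
    (hz : z ∈ Ω) (v w : E3 d) :
    fderiv ℝ (fderiv ℝ S) z v w = fderiv ℝ (fderiv ℝ S) z w v :=
  (contDiffAt_of_mem hΩ hS hz).isSymmSndFDerivAt
    (by simp only [minSmoothness_of_isRCLikeNormedField]; exact WithTop.coe_le_coe.2 le_top) v w

lemma third_symm_left (hΩ : IsOpen Ω) (hS : ContDiffOn ℝ (⊤ : ℕ∞) S Ω) {z : E3 d}
    (hz : z ∈ Ω) (u v w : E3 d) :
    fderiv ℝ (fderiv ℝ (fderiv ℝ S)) z u v w = fderiv ℝ (fderiv ℝ (fderiv ℝ S)) z v u w := by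
  rw [(contDiffAt_one hΩ hS hz).isSymmSndFDerivAt
    (by simp only [minSmoothness_of_isRCLikeNormedField]; exact WithTop.coe_le_coe.2 le_top) u v]

lemma hasDerivAt_second (hΩ : IsOpen Ω) (hS : ContDiffOn ℝ (⊤ : ℕ∞) S Ω) {z z' : E3 d}
    {γ : ℝ → E3 d} {s : ℝ} (hγ : HasDerivAt γ z' s) (hz : γ s = z) (hzΩ : z ∈ Ω) (v w : E3 d) :
    HasDerivAt (fun t => fderiv ℝ (fderiv ℝ S) (γ t) v w)
      (fderiv ℝ (fderiv ℝ (fderiv ℝ S)) z z' v w) s := by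
  subst hz
  simpa using hasDerivAt_bilin (hasFDerivAt_gen_fderiv2 hΩ hS hzΩ) hγ (hasDerivAt_const s v) w

lemma hasDerivAt_first (hΩ : IsOpen Ω) (hS : ContDiffOn ℝ (⊤ : ℕ∞) S Ω) {z z' : E3 d}
    {γ : ℝ → E3 d} {s : ℝ} (hγ : HasDerivAt γ z' s) (hz : γ s = z) (hzΩ : z ∈ Ω) (v : E3 d) :
    HasDerivAt (fun t => fderiv ℝ S (γ t) v) (fderiv ℝ (fderiv ℝ S) z z' v) s := by
  subst hz
  exact hasDerivAt_lin (hasFDerivAt_gen_fderiv hΩ hS hzΩ) hγ v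

lemma third_symm_right (hΩ : IsOpen Ω) (hS : ContDiffOn ℝ (⊤ : ℕ∞) S Ω) {z : E3 d}
    (hz : z ∈ Ω) (u v w : E3 d) :
    fderiv ℝ (fderiv ℝ (fderiv ℝ S)) z u v w = fderiv ℝ (fderiv ℝ (fderiv ℝ S)) z u w v := by
  have hl := hasDerivAt_line z u 0
  have hev : ∀ᶠ t : ℝ in nhds 0, z + t • u ∈ Ω :=
    hl.continuousAt.eventually_mem (hΩ.mem_nhds (by simpa using hz))
  refine (hasDerivAt_second hΩ hS hl (by simp) hz v w).unique
    ((hasDerivAt_second hΩ hS hl (by simp) hz w v).congr_of_eventuallyEq ?_)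
  filter_upwards [hev] with t ht using second_symm hΩ hS ht v w

/-! ### Derivatives prescribed by the SGS conditions -/

lemma sgs_first_fst (hΩ : IsOpen Ω) (hS : ContDiffOn ℝ (⊤ : ℕ∞) S Ω) (h : SGS d Ω S)
    {p y : V d} (hz : (p, 0, y) ∈ Ω) (u : Fin d) :
    fderiv ℝ S (p, 0, y) (e d u, 0, 0) = y u := by
  refine fderiv_apply_eq_of_line hΩ hz (hasFDerivAt_gen hΩ hS hz).differentiableAt
    (fun t => ∑ i, p i * y i + t * y u) ?_ ?_
  · simpa using ((hasDerivAt_id (0 : ℝ)).mul_const (y u)).const_add (∑ i, p i * y i)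
  · intro t ht
    have ht' : (p + t • e d u, 0, y) ∈ Ω := by simpa using ht
    simpa [e, add_mul, Finset.sum_add_distrib, Pi.single_apply] using h.1 _ _ ht'

lemma sgs_first_trd (hΩ : IsOpen Ω) (hS : ContDiffOn ℝ (⊤ : ℕ∞) S Ω) (h : SGS d Ω S)
    {p y : V d} (hz : (p, 0, y) ∈ Ω) (u : Fin d) :
    fderiv ℝ S (p, 0, y) (0, 0, e d u) = p u := by
  refine fderiv_apply_eq_of_line hΩ hz (hasFDerivAt_gen hΩ hS hz).differentiableAt
    (fun t => ∑ i, p i * y i + t * p u) ?_ ?_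
  · simpa using ((hasDerivAt_id (0 : ℝ)).mul_const (p u)).const_add (∑ i, p i * y i)
  · intro t ht
    have ht' : (p, 0, y + t • e d u) ∈ Ω := by simpa using ht
    simpa [e, mul_add, Finset.sum_add_distrib, Pi.single_apply, mul_comm] using h.1 _ _ ht'

lemma sgs_second_snd (hΩ : IsOpen Ω) (hS : ContDiffOn ℝ (⊤ : ℕ∞) S Ω) (h : SGS d Ω S)
    {q y : V d} (hz : (0, q, y) ∈ Ω) (u : Fin d) :
    fderiv ℝ S (0, q, y) (0, e d u, 0) = y u := by
  refine fderiv_apply_eq_of_line hΩ hz (hasFDerivAt_gen hΩ hS hz).differentiableAt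
    (fun t => ∑ i, q i * y i + t * y u) ?_ ?_
  · simpa using ((hasDerivAt_id (0 : ℝ)).mul_const (y u)).const_add (∑ i, q i * y i)
  · intro t ht
    have ht' : (0, q + t • e d u, y) ∈ Ω := by simpa using ht
    simpa [e, add_mul, Finset.sum_add_distrib, Pi.single_apply] using h.2.1 _ _ ht'

lemma sgs_second_trd (hΩ : IsOpen Ω) (hS : ContDiffOn ℝ (⊤ : ℕ∞) S Ω) (h : SGS d Ω S)
    {q y : V d} (hz : (0, q, y) ∈ Ω) (u : Fin d) :
    fderiv ℝ S (0, q, y) (0, 0, e d u) = q u := by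
  refine fderiv_apply_eq_of_line hΩ hz (hasFDerivAt_gen hΩ hS hz).differentiableAt
    (fun t => ∑ i, q i * y i + t * q u) ?_ ?_
  · simpa using ((hasDerivAt_id (0 : ℝ)).mul_const (q u)).const_add (∑ i, q i * y i)
  · intro t ht
    have ht' : (0, q, y + t • e d u) ∈ Ω := by simpa using ht
    simpa [e, mul_add, Finset.sum_add_distrib, Pi.single_apply, mul_comm] using h.2.1 _ _ ht'

/-- The second-order analogue of `fderiv_apply_eq_of_line`: `D²S(v, w)` is read off from the
values of `DS(w)` on a line in the direction `v`. -/
lemma second_eq_of_line (hΩ : IsOpen Ω) (hS : ContDiffOn ℝ (⊤ : ℕ∞) S Ω) {z v : E3 d}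
    (hz : z ∈ Ω) {w : E3 d} {m : ℝ} (g : ℝ → ℝ) (hg : HasDerivAt g m 0)
    (h : ∀ t : ℝ, z + t • v ∈ Ω → fderiv ℝ S (z + t • v) w = g t) :
    fderiv ℝ (fderiv ℝ S) z v w = m := by
  have hl := hasDerivAt_line z v 0
  have hev : ∀ᶠ t : ℝ in nhds 0, z + t • v ∈ Ω :=
    hl.continuousAt.eventually_mem (hΩ.mem_nhds (by simpa using hz))
  refine (hasDerivAt_first hΩ hS hl (by simp) hz w).unique (hg.congr_of_eventuallyEq ?_)
  filter_upwards [hev] with t ht using h t ht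

lemma sgs_trd_fst (hΩ : IsOpen Ω) (hS : ContDiffOn ℝ (⊤ : ℕ∞) S Ω) (h : SGS d Ω S)
    {y : V d} (hz : (0, 0, y) ∈ Ω) (v : V d) (k : Fin d) :
    fderiv ℝ (fderiv ℝ S) (0, 0, y) (0, 0, v) (e d k, 0, 0) = v k := by
  refine second_eq_of_line hΩ hS hz (fun t => y k + t * v k) ?_ ?_
  · simpa using ((hasDerivAt_id (0 : ℝ)).mul_const (v k)).const_add (y k)
  · intro t ht
    have ht' : ((0 : V d), (0 : V d), y + t • v) ∈ Ω := by simpa using ht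
    simpa using sgs_first_fst hΩ hS h ht' k

lemma sgs_trd_snd (hΩ : IsOpen Ω) (hS : ContDiffOn ℝ (⊤ : ℕ∞) S Ω) (h : SGS d Ω S)
    {y : V d} (hz : (0, 0, y) ∈ Ω) (v : V d) (k : Fin d) :
    fderiv ℝ (fderiv ℝ S) (0, 0, y) (0, 0, v) (0, e d k, 0) = v k := by
  refine second_eq_of_line hΩ hS hz (fun t => y k + t * v k) ?_ ?_
  · simpa using ((hasDerivAt_id (0 : ℝ)).mul_const (v k)).const_add (y k)
  · intro t ht
    have ht' : ((0 : V d), (0 : V d), y + t • v) ∈ Ω := by simpa using ht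
    simpa using sgs_second_snd hΩ hS h ht' k

lemma sgs_fst_fst (hΩ : IsOpen Ω) (hS : ContDiffOn ℝ (⊤ : ℕ∞) S Ω) (h : SGS d Ω S)
    {y : V d} (hz : (0, 0, y) ∈ Ω) (v : V d) (k : Fin d) :
    fderiv ℝ (fderiv ℝ S) (0, 0, y) (v, 0, 0) (e d k, 0, 0) = 0 := by
  refine second_eq_of_line hΩ hS hz (fun _ => y k) (hasDerivAt_const _ _) ?_
  intro t ht
  have ht' : (t • v, (0 : V d), y) ∈ Ω := by simpa using ht
  simpa using sgs_first_fst hΩ hS h ht' k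

lemma sgs_snd_snd (hΩ : IsOpen Ω) (hS : ContDiffOn ℝ (⊤ : ℕ∞) S Ω) (h : SGS d Ω S)
    {y : V d} (hz : (0, 0, y) ∈ Ω) (v : V d) (k : Fin d) :
    fderiv ℝ (fderiv ℝ S) (0, 0, y) (0, v, 0) (0, e d k, 0) = 0 := by
  refine second_eq_of_line hΩ hS hz (fun _ => y k) (hasDerivAt_const _ _) ?_
  intro t ht
  have ht' : ((0 : V d), t • v, y) ∈ Ω := by simpa using ht
  simpa using sgs_second_snd hΩ hS h ht' k

/-- The mixed Hessian `∂²S/∂p₁∂p₂` at `p = 0` is skew, because the pure Hessians vanish there and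
`S` is constant on the antidiagonals `(p, -p, y)`. -/
lemma mixed_skew (hΩ : IsOpen Ω) (hS : ContDiffOn ℝ (⊤ : ℕ∞) S Ω) (h : SGS d Ω S)
    {y : V d} (hz : (0, 0, y) ∈ Ω) (k l : Fin d) :
    fderiv ℝ (fderiv ℝ S) (0, 0, y) (e d k, 0, 0) (0, e d l, 0)
      = - fderiv ℝ (fderiv ℝ S) (0, 0, y) (e d l, 0, 0) (0, e d k, 0) := by
  have h1 : ∀ p : V d, (p, -p, y) ∈ Ω →
      fderiv ℝ S (p, -p, y) (e d l, -e d l, 0) = 0 := by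
    intro p hp
    refine fderiv_apply_eq_of_line hΩ hp (hasFDerivAt_gen hΩ hS hp).differentiableAt
      (fun _ => 0) (hasDerivAt_const _ _) ?_
    intro t ht
    have he : ((p, -p, y) + t • (e d l, -e d l, 0) : E3 d)
        = (p + t • e d l, -(p + t • e d l), y) := by
      refine Prod.ext ?_ (Prod.ext ?_ ?_) <;> simp [add_comm]
    rw [he] at ht ⊢
    exact h.2.2 _ _ ht
  have h2 : fderiv ℝ (fderiv ℝ S) (0, 0, y) (e d k, -e d k, 0) (e d l, -e d l, 0) = 0 := by
    refine second_eq_of_line hΩ hS hz (fun _ => 0) (hasDerivAt_const _ _) ?_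
    intro t ht
    have he : ((0, 0, y) + t • (e d k, -e d k, 0) : E3 d)
        = (t • e d k, -(t • e d k), y) := by
      refine Prod.ext ?_ (Prod.ext ?_ ?_) <;> simp
    rw [he] at ht ⊢
    exact h1 _ ht
  have hd : ∀ v : V d, ((v, -v, 0) : E3 d) = (v, 0, 0) - (0, v, 0) := by
    intro v; simp
  rw [hd, hd] at h2
  simp only [map_sub, sub_apply] at h2
  rw [sgs_fst_fst hΩ hS h hz, sgs_snd_snd hΩ hS h hz,
    second_symm hΩ hS hz (0, e d k, 0) (e d l, 0, 0)] at h2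
  linarith

/-! ### The stationarity identity -/

/-- Envelope principle for one side of the SGA equation along a curve: in `f + g - X·P`, let `f`
depend on `X` with gradient `P` and let `g` depend only on `P`, with gradient `X`. Then the motion
of `X` and `P` does not contribute, and only the explicit motion `v` of the other arguments of `f`
remains. -/
lemma stationary_deriv {f g : ℝ → ℝ} {X P : ℝ → V d} {X' P' : V d} {L M : E3 d →L[ℝ] ℝ}
    {v w : E3 d}
    (hX : HasDerivAt X X' 0) (hP : HasDerivAt P P' 0)
    (hf : HasDerivAt f (L (v + (0, 0, X'))) 0) (hg : HasDerivAt g (M w) 0)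
    (hL : ∀ u, P 0 u = L (0, 0, e d u)) (hM : M w = ∑ u, P' u * X 0 u) :
    HasDerivAt (fun t => f t + g t - ∑ u, X t u * P t u) (L v) 0 := by
  have hs : HasDerivAt (fun t => ∑ u, X t u * P t u)
      (∑ u, (X' u * P 0 u + X 0 u * P' u)) 0 :=
    HasDerivAt.fun_sum fun u _ => ((hasDerivAt_pi.1 hX) u).mul ((hasDerivAt_pi.1 hP) u)
  refine ((hf.add hg).sub hs).congr_deriv ?_
  rw [map_add, apply_trd_eq_sum, hM, Finset.sum_add_distrib]
  simp only [hL, mul_comm (X 0 _)]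
  ring

/-- Equality of the `p₂`-gradients of the two sides of the SGA equation, at `p₂ = 0`: the implicit
variables drop out by stationarity, and SGS makes them explicit. -/
lemma sga_identity (hΩ : IsOpen Ω) (hS : ContDiffOn ℝ (⊤ : ℕ∞) S Ω) (h : SGS d Ω S)
    {U : Set (V d)} (hA : SGA d U Ω S) :
    ∃ W : Set (V d × V d × V d × V d), IsOpen W ∧ (∀ x ∈ U, (0, 0, 0, x) ∈ W) ∧
      ∀ p q x, (p, 0, q, x) ∈ W →
        (p, q, x) ∈ Ω ∧ (p, 0, fun u => fderiv ℝ S (p, q, x) (e d u, 0, 0)) ∈ Ω ∧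
        (0, q, fun u => fderiv ℝ S (p, q, x) (0, e d u, 0)) ∈ Ω ∧
        ∀ k, fderiv ℝ S (p, 0, fun u => fderiv ℝ S (p, q, x) (e d u, 0, 0)) (0, e d k, 0)
          = fderiv ℝ S (0, q, fun u => fderiv ℝ S (p, q, x) (0, e d u, 0)) (e d k, 0, 0) := by
  obtain ⟨W, bx, bp, tx, tp, hW, hUW, hbx, hbp, htx, htp, H⟩ := hA
  refine ⟨W, hW, hUW, ?_⟩
  intro p q x hpW
  obtain ⟨m1, m2, m3, m4, e1, e2, e3, e4, -⟩ := H p 0 q x hpW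
  -- At `p₂ = 0` the SGS conditions give `p̄ = p` and `p̃ = q`, which makes `x̄` and `x̃` explicit.
  have hbp0 : bp (p, 0, q, x) = p := by
    funext k; rw [e2 k, sgs_first_trd hΩ hS h m2]
  have htp0 : tp (p, 0, q, x) = q := by
    funext k; rw [e4 k, sgs_second_trd hΩ hS h m4]
  have hbx0 : bx (p, 0, q, x) = fun u => fderiv ℝ S (p, q, x) (e d u, 0, 0) := by
    funext k; rw [e1 k, hbp0]
  have htx0 : tx (p, 0, q, x) = fun u => fderiv ℝ S (p, q, x) (0, e d u, 0) := by
    funext k; rw [e3 k, htp0]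
  rw [← hbx0, ← htx0]
  refine ⟨by rwa [hbp0] at m1, m2, m4, ?_⟩
  intro k
  set γ : ℝ → V d × V d × V d × V d := fun t => (p, t • e d k, q, x) with hγ
  have hq : HasDerivAt (fun t : ℝ => t • e d k) (e d k) 0 := by
    simpa using (hasDerivAt_id (0 : ℝ)).smul_const (e d k)
  have hγ' : HasDerivAt γ (0, e d k, 0, 0) 0 :=
    (hasDerivAt_const _ p).prodMk (hq.prodMk ((hasDerivAt_const _ q).prodMk (hasDerivAt_const _ x)))
  have hγ0 : γ 0 = (p, 0, q, x) := by simp [hγ]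
  have hdiff : ∀ f : V d × V d × V d × V d → V d, ContDiffOn ℝ (⊤ : ℕ∞) f W →
      ∃ f', HasDerivAt (fun t => f (γ t)) f' 0 := by
    intro f hf
    have h1 : HasFDerivAt f (fderiv ℝ f (γ 0)) (γ 0) := by
      rw [hγ0]
      exact ((hf.contDiffAt (hW.mem_nhds hpW)).differentiableAt (by simp)).hasFDerivAt
    exact ⟨_, h1.comp_hasDerivAt (0 : ℝ) hγ'⟩
  obtain ⟨bx', hbx'⟩ := hdiff bx hbx
  obtain ⟨bp', hbp'⟩ := hdiff bp hbp
  obtain ⟨tx', htx'⟩ := hdiff tx htx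
  obtain ⟨tp', htp'⟩ := hdiff tp htp
  have hF : HasDerivAt (fun t => S (p, t • e d k, bx (γ t)) + S (bp (γ t), q, x)
      - ∑ u, bx (γ t) u * bp (γ t) u)
      (fderiv ℝ S (p, 0, bx (p, 0, q, x)) (0, e d k, 0)) 0 := by
    refine stationary_deriv (L := fderiv ℝ S (p, 0, bx (p, 0, q, x)))
      (M := fderiv ℝ S (bp (p, 0, q, x), q, x)) (v := (0, e d k, 0))
      (w := (bp', 0, 0)) hbx' hbp' ?_ ?_ ?_ ?_
    · have hc : HasDerivAt (fun t => ((p, t • e d k, bx (γ t)) : E3 d))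
          ((0, e d k, 0) + (0, 0, bx')) 0 := by
        simpa using (hasDerivAt_const (0 : ℝ) p).prodMk (hq.prodMk hbx')
      refine HasFDerivAt.comp_hasDerivAt (l := S) (0 : ℝ) ?_ hc
      simpa [hγ0] using hasFDerivAt_gen hΩ hS m2
    · have hc : HasDerivAt (fun t => ((bp (γ t), q, x) : E3 d)) (bp', 0, 0) 0 :=
        hbp'.prodMk ((hasDerivAt_const _ q).prodMk (hasDerivAt_const _ x))
      refine HasFDerivAt.comp_hasDerivAt (l := S) (0 : ℝ) ?_ hc
      simpa [hγ0] using hasFDerivAt_gen hΩ hS m1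
    · intro u; rw [hγ0]; exact e2 u
    · rw [apply_fst_eq_sum]
      simp only [hγ0, e1]
  have hG : HasDerivAt (fun t => S (t • e d k, q, tx (γ t)) + S (p, tp (γ t), x)
      - ∑ u, tx (γ t) u * tp (γ t) u)
      (fderiv ℝ S (0, q, tx (p, 0, q, x)) (e d k, 0, 0)) 0 := by
    refine stationary_deriv (L := fderiv ℝ S (0, q, tx (p, 0, q, x)))
      (M := fderiv ℝ S (p, tp (p, 0, q, x), x)) (v := (e d k, 0, 0))
      (w := (0, tp', 0)) htx' htp' ?_ ?_ ?_ ?_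
    · have hc : HasDerivAt (fun t => ((t • e d k, q, tx (γ t)) : E3 d))
          ((e d k, 0, 0) + (0, 0, tx')) 0 := by
        simpa using hq.prodMk ((hasDerivAt_const (0 : ℝ) q).prodMk htx')
      refine HasFDerivAt.comp_hasDerivAt (l := S) (0 : ℝ) ?_ hc
      simpa [hγ0] using hasFDerivAt_gen hΩ hS m4
    · have hc : HasDerivAt (fun t => ((p, tp (γ t), x) : E3 d)) (0, tp', 0) 0 :=
        (hasDerivAt_const _ p).prodMk (htp'.prodMk (hasDerivAt_const _ x))
      refine HasFDerivAt.comp_hasDerivAt (l := S) (0 : ℝ) ?_ hc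
      simpa [hγ0] using hasFDerivAt_gen hΩ hS m3
    · intro u; rw [hγ0]; exact e4 u
    · rw [apply_snd_eq_sum]
      simp only [hγ0, e3]
  have hev : ∀ᶠ t : ℝ in nhds 0, γ t ∈ W :=
    hγ'.continuousAt.eventually_mem (hW.mem_nhds (by rwa [hγ0]))
  refine hF.unique (hG.congr_of_eventuallyEq ?_)
  filter_upwards [hev] with t ht
  exact (H p (t • e d k) q x ht).2.2.2.2.2.2.2.2

/-! ### Third-order expansion -/

/-- The `q`-derivative at `q = 0` of the stationarity identity, in the direction `e_c`. -/
lemma sga_identity_deriv (hΩ : IsOpen Ω) (hS : ContDiffOn ℝ (⊤ : ℕ∞) S Ω) (h : SGS d Ω S)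
    {W : Set (V d × V d × V d × V d)} (hW : IsOpen W)
    (H : ∀ p q x, (p, 0, q, x) ∈ W →
        (p, q, x) ∈ Ω ∧ (p, 0, fun u => fderiv ℝ S (p, q, x) (e d u, 0, 0)) ∈ Ω ∧
        (0, q, fun u => fderiv ℝ S (p, q, x) (0, e d u, 0)) ∈ Ω ∧
        ∀ k, fderiv ℝ S (p, 0, fun u => fderiv ℝ S (p, q, x) (e d u, 0, 0)) (0, e d k, 0)
          = fderiv ℝ S (0, q, fun u => fderiv ℝ S (p, q, x) (0, e d u, 0)) (e d k, 0, 0))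
    {p x : V d} (hp : (p, 0, 0, x) ∈ W) (k c : Fin d) :
    fderiv ℝ (fderiv ℝ S) (p, 0, x)
        (0, 0, fun u => fderiv ℝ (fderiv ℝ S) (p, 0, x) (0, e d c, 0) (e d u, 0, 0)) (0, e d k, 0)
      = fderiv ℝ (fderiv ℝ S) (0, 0, fun u => fderiv ℝ S (p, 0, x) (0, e d u, 0))
          (0, e d c, 0) (e d k, 0, 0)
        + fderiv ℝ (fderiv ℝ S) (p, 0, x) (0, e d c, 0) (0, e d k, 0) := by
  obtain ⟨m1, -, m3, -⟩ := H p 0 x hp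
  have hq : HasDerivAt (fun t : ℝ => t • e d c) (e d c) 0 := by
    simpa using (hasDerivAt_id (0 : ℝ)).smul_const (e d c)
  have hc : HasDerivAt (fun t : ℝ => ((p, t • e d c, x) : E3 d)) (0, e d c, 0) 0 :=
    (hasDerivAt_const _ p).prodMk (hq.prodMk (hasDerivAt_const _ x))
  have hX : HasDerivAt (fun t : ℝ => (fun u => fderiv ℝ S (p, t • e d c, x) (e d u, 0, 0) : V d))
      (fun u => fderiv ℝ (fderiv ℝ S) (p, 0, x) (0, e d c, 0) (e d u, 0, 0)) 0 :=
    hasDerivAt_pi.2 fun u => hasDerivAt_first hΩ hS hc (by simp) m1 _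
  have hY : HasDerivAt (fun t : ℝ => (fun u => fderiv ℝ S (p, t • e d c, x) (0, e d u, 0) : V d))
      (fun u => fderiv ℝ (fderiv ℝ S) (p, 0, x) (0, e d c, 0) (0, e d u, 0)) 0 :=
    hasDerivAt_pi.2 fun u => hasDerivAt_first hΩ hS hc (by simp) m1 _
  have hX0 : (fun u => fderiv ℝ S (p, 0, x) (e d u, 0, 0)) = x :=
    funext fun u => sgs_first_fst hΩ hS h m1 u
  have hL := hasDerivAt_first hΩ hS (z := (p, 0, x))
    ((hasDerivAt_const (0 : ℝ) p).prodMk ((hasDerivAt_const (0 : ℝ) (0 : V d)).prodMk hX))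
    (by simp [hX0]) m1 (0, e d k, 0)
  have hR := hasDerivAt_first hΩ hS
    (z := (0, 0, fun u => fderiv ℝ S (p, 0, x) (0, e d u, 0)))
    ((hasDerivAt_const (0 : ℝ) (0 : V d)).prodMk (hq.prodMk hY))
    (by simp) m3 (e d k, 0, 0)
  have hγ : ContinuousAt (fun t : ℝ => (p, (0 : V d), t • e d c, x)) 0 := by fun_prop
  have hev : ∀ᶠ t : ℝ in nhds 0, (p, (0 : V d), t • e d c, x) ∈ W :=
    hγ.eventually_mem (hW.mem_nhds (by simpa using hp))
  have hLR := hL.unique (hR.congr_of_eventuallyEq (by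
    filter_upwards [hev] with t ht using (H p (t • e d c) x ht).2.2.2 k))
  rw [hLR]
  have hsplit : ((0, e d c, fun u => fderiv ℝ (fderiv ℝ S) (p, 0, x) (0, e d c, 0) (0, e d u, 0))
      : E3 d) = (0, e d c, 0)
        + (0, 0, fun u => fderiv ℝ (fderiv ℝ S) (p, 0, x) (0, e d c, 0) (0, e d u, 0)) := by
    simp
  rw [hsplit, map_add, add_apply, sgs_trd_fst hΩ hS h m3]

/-- The mixed third-order coefficient of the SGA equation. The terms without an `x`-derivative
are symmetric in `a, k` on the left and in `c, k` on the right. -/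
lemma third_order_identity (hΩ : IsOpen Ω) (hS : ContDiffOn ℝ (⊤ : ℕ∞) S Ω) (h : SGS d Ω S)
    {U : Set (V d)} (hA : SGA d U Ω S) {x : V d} (hx : x ∈ U) (hz : (0, 0, x) ∈ Ω)
    (a k c : Fin d) :
    fderiv ℝ (fderiv ℝ (fderiv ℝ S)) (0, 0, x) (e d a, 0, 0)
        (0, 0, fun u => fderiv ℝ (fderiv ℝ S) (0, 0, x) (0, e d c, 0) (e d u, 0, 0)) (0, e d k, 0)
      + fderiv ℝ (fderiv ℝ (fderiv ℝ S)) (0, 0, x) (e d a, 0, 0) (0, e d c, 0) (e d k, 0, 0)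
    = fderiv ℝ (fderiv ℝ (fderiv ℝ S)) (0, 0, x)
        (0, 0, fun u => fderiv ℝ (fderiv ℝ S) (0, 0, x) (e d a, 0, 0) (0, e d u, 0))
        (0, e d c, 0) (e d k, 0, 0)
      + fderiv ℝ (fderiv ℝ (fderiv ℝ S)) (0, 0, x) (e d a, 0, 0) (0, e d c, 0) (0, e d k, 0) := by
  obtain ⟨W, hW, hUW, H⟩ := sga_identity hΩ hS h hA
  have hp : HasDerivAt (fun t : ℝ => t • e d a) (e d a) 0 := by
    simpa using (hasDerivAt_id (0 : ℝ)).smul_const (e d a)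
  have hc : HasDerivAt (fun t : ℝ => ((t • e d a, 0, x) : E3 d)) (e d a, 0, 0) 0 :=
    hp.prodMk ((hasDerivAt_const _ 0).prodMk (hasDerivAt_const _ x))
  have hξ : HasDerivAt (fun t : ℝ => (fun u => fderiv ℝ (fderiv ℝ S) (t • e d a, 0, x)
        (0, e d c, 0) (e d u, 0, 0) : V d))
      (fun u => fderiv ℝ (fderiv ℝ (fderiv ℝ S)) (0, 0, x) (e d a, 0, 0)
        (0, e d c, 0) (e d u, 0, 0)) 0 :=
    hasDerivAt_pi.2 fun u => hasDerivAt_second hΩ hS hc (by simp) hz _ _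
  have hY : HasDerivAt (fun t : ℝ => (fun u => fderiv ℝ S (t • e d a, 0, x) (0, e d u, 0) : V d))
      (fun u => fderiv ℝ (fderiv ℝ S) (0, 0, x) (e d a, 0, 0) (0, e d u, 0)) 0 :=
    hasDerivAt_pi.2 fun u => hasDerivAt_first hΩ hS hc (by simp) hz _
  have hY0 : (fun u => fderiv ℝ S ((0 : V d), (0 : V d), x) (0, e d u, 0)) = x :=
    funext fun u => sgs_second_snd hΩ hS h hz u
  have hL : HasDerivAt (fun t : ℝ => fderiv ℝ (fderiv ℝ S) (t • e d a, 0, x)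
        (0, 0, fun u => fderiv ℝ (fderiv ℝ S) (t • e d a, 0, x) (0, e d c, 0) (e d u, 0, 0))
        (0, e d k, 0))
      (fderiv ℝ (fderiv ℝ (fderiv ℝ S)) (0, 0, x) (e d a, 0, 0)
        (0, 0, fun u => fderiv ℝ (fderiv ℝ S) (0, 0, x) (0, e d c, 0) (e d u, 0, 0)) (0, e d k, 0)
      + fderiv ℝ (fderiv ℝ (fderiv ℝ S)) (0, 0, x) (e d a, 0, 0) (0, e d c, 0) (e d k, 0, 0))
      0 := by
    have h2 : HasFDerivAt (fderiv ℝ (fderiv ℝ S))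
        (fderiv ℝ (fderiv ℝ (fderiv ℝ S)) (0, 0, x)) ((fun t : ℝ => ((t • e d a, 0, x) : E3 d)) 0) := by
      simpa using hasFDerivAt_gen_fderiv2 hΩ hS hz
    have h3 := hasDerivAt_bilin h2 hc ((hasDerivAt_const (0 : ℝ) (0 : V d)).prodMk
        ((hasDerivAt_const (0 : ℝ) (0 : V d)).prodMk hξ)) (0, e d k, 0)
    simp only [zero_smul] at h3
    rw [sgs_trd_snd hΩ hS h hz] at h3
    exact h3
  have hR := (hasDerivAt_second hΩ hS (z := (0, 0, x))
      ((hasDerivAt_const (0 : ℝ) (0 : V d)).prodMk ((hasDerivAt_const (0 : ℝ) (0 : V d)).prodMk hY))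
      (by simp [hY0]) hz (0, e d c, 0) (e d k, 0, 0)).add
    (hasDerivAt_second hΩ hS hc (by simp) hz (0, e d c, 0) (0, e d k, 0))
  have hγ : ContinuousAt (fun t : ℝ => (t • e d a, (0 : V d), (0 : V d), x)) 0 := by fun_prop
  have hev : ∀ᶠ t : ℝ in nhds 0, (t • e d a, (0 : V d), (0 : V d), x) ∈ W :=
    hγ.eventually_mem (hW.mem_nhds (by simpa using hUW x hx))
  refine hL.unique (hR.congr_of_eventuallyEq ?_)
  filter_upwards [hev] with t ht using sga_identity_deriv hΩ hS h hW H ht k c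

/-! ### The bivector and its Jacobi identity -/

lemma alphaS_eq (hΩ : IsOpen Ω) (hS : ContDiffOn ℝ (⊤ : ℕ∞) S Ω) {y : V d}
    (hz : (0, 0, y) ∈ Ω) (k l : Fin d) :
    alphaS d S y k l = 2 * fderiv ℝ (fderiv ℝ S) (0, 0, y) (e d k, 0, 0) (0, e d l, 0) := by
  have h1 : HasFDerivAt (fun w => fderiv ℝ S w (0, e d l, 0)) _ ((0, 0, y) : E3 d) :=
    (hasFDerivAt_gen_fderiv hΩ hS hz).clm_apply
      (hasFDerivAt_const ((0, e d l, 0) : E3 d) ((0, 0, y) : E3 d))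
  rw [alphaS, h1.fderiv]
  simp

lemma fderiv_alphaS (hΩ : IsOpen Ω) (hS : ContDiffOn ℝ (⊤ : ℕ∞) S Ω) {x : V d}
    (hz : (0, 0, x) ∈ Ω) (k l u : Fin d) :
    fderiv ℝ (fun y => alphaS d S y k l) x (e d u)
      = 2 * fderiv ℝ (fderiv ℝ (fderiv ℝ S)) (0, 0, x)
          (0, 0, e d u) (e d k, 0, 0) (0, e d l, 0) := by
  have hl := hasDerivAt_line x (e d u) 0
  have hc : HasDerivAt (fun t : ℝ => ((0, 0, x + t • e d u) : E3 d)) (0, 0, e d u) 0 :=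
    (hasDerivAt_const _ _).prodMk ((hasDerivAt_const _ _).prodMk hl)
  have hι : ContinuousAt (fun y : V d => ((0, 0, y) : E3 d)) x := by fun_prop
  have hev : ∀ᶠ y in nhds x, ((0, 0, y) : E3 d) ∈ Ω := hι.eventually_mem (hΩ.mem_nhds hz)
  have hdiff : DifferentiableAt ℝ (fun y => alphaS d S y k l) x := by
    have h2 : DifferentiableAt ℝ
        (fun y : V d => fderiv ℝ (fderiv ℝ S) (0, 0, y) (e d k, 0, 0) (0, e d l, 0)) x := by
      have hD := ((hasFDerivAt_gen_fderiv2 hΩ hS hz).differentiableAt.clm_apply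
        (differentiableAt_const ((e d k, 0, 0) : E3 d))).clm_apply
        (differentiableAt_const ((0, e d l, 0) : E3 d))
      exact hD.comp x (f := fun y : V d => ((0, 0, y) : E3 d))
        ((differentiableAt_const (0 : V d)).prodMk
          ((differentiableAt_const (0 : V d)).prodMk differentiableAt_id))
    refine (h2.const_mul 2).congr_of_eventuallyEq ?_
    filter_upwards [hev] with y hy using alphaS_eq hΩ hS hy k l
  have hLHS : HasDerivAt (fun t : ℝ => alphaS d S (x + t • e d u) k l)
      (fderiv ℝ (fun y => alphaS d S y k l) x (e d u)) 0 := by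
    refine HasFDerivAt.comp_hasDerivAt (l := fun y => alphaS d S y k l) (0 : ℝ) ?_ hl
    simpa using hdiff.hasFDerivAt
  have hRHS := (hasDerivAt_second hΩ hS hc (by simp) hz (e d k, 0, 0) (0, e d l, 0)).const_mul 2
  refine hLHS.unique (hRHS.congr_of_eventuallyEq ?_)
  have hev0 : ∀ᶠ t : ℝ in nhds 0, ((0, 0, x + t • e d u) : E3 d) ∈ Ω :=
    hc.continuousAt.eventually_mem (hΩ.mem_nhds (by simpa using hz))
  filter_upwards [hev0] with t ht using alphaS_eq hΩ hS ht k l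

end

/-- If `S` satisfies the SGA equation and the SGS conditions on `U`, then
`α^{kl}(x) := 2 ∂²S/∂p₁^k ∂p₂^l (0,0,x)` is a Poisson structure on `U`:
skew-symmetric and satisfying the Jacobi identity. -/
theorem generating_function_gives_poisson
    (d : ℕ) (hd : 1 ≤ d)
    (U : Set (Fin d → ℝ)) (hU : IsOpen U)
    (Ω : Set ((Fin d → ℝ) × (Fin d → ℝ) × (Fin d → ℝ))) (hΩ : IsOpen Ω)
    (hUΩ : ∀ x ∈ U, ((0 : Fin d → ℝ), (0 : Fin d → ℝ), x) ∈ Ω)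
    (S : (Fin d → ℝ) × (Fin d → ℝ) × (Fin d → ℝ) → ℝ)
    (hS : ContDiffOn ℝ (⊤ : ℕ∞) S Ω)
    (hSGS : SGS d Ω S) (hSGA : SGA d U Ω S) :
    ∀ x ∈ U,
      (∀ k l, alphaS d S x k l = - alphaS d S x l k) ∧
      (∀ k l m, ∑ u : Fin d,
          (alphaS d S x k u * fderiv ℝ (fun y => alphaS d S y l m) x (e d u)
            + alphaS d S x l u * fderiv ℝ (fun y => alphaS d S y m k) x (e d u)
            + alphaS d S x m u * fderiv ℝ (fun y => alphaS d S y k l) x (e d u)) = 0) := by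
  intro x hx
  have hz := hUΩ x hx
  have hskew : ∀ k l, alphaS d S x k l = - alphaS d S x l k := by
    intro k l
    rw [alphaS_eq hΩ hS hz, alphaS_eq hΩ hS hz, mixed_skew hΩ hS hSGS hz k l]
    ring
  refine ⟨hskew, ?_⟩
  have hdskew : ∀ k l u, fderiv ℝ (fun y => alphaS d S y k l) x (e d u)
      = - fderiv ℝ (fun y => alphaS d S y l k) x (e d u) := by
    intro k l u
    have hι : ContinuousAt (fun y : V d => ((0, 0, y) : E3 d)) x := by fun_prop
    have hev : (fun y => alphaS d S y k l) =ᶠ[nhds x] fun y => - alphaS d S y l k := by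
      filter_upwards [hι.eventually_mem (hΩ.mem_nhds hz)] with y hy
      rw [alphaS_eq hΩ hS hy, alphaS_eq hΩ hS hy, mixed_skew hΩ hS hSGS hy k l]
      ring
    rw [hev.fderiv_eq, fderiv_fun_neg]
    simp
  -- `J a k c = α^{au} ∂_u α^{kc}`; the Jacobi identity is its cyclic sum.
  set J : Fin d → Fin d → Fin d → ℝ := fun a k c =>
    ∑ u, alphaS d S x a u * fderiv ℝ (fun y => alphaS d S y k c) x (e d u) with hJ
  have hJskew : ∀ a k c, J a k c = - J a c k := by
    intro a k c
    simp only [hJ, ← Finset.sum_neg_distrib]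
    refine Finset.sum_congr rfl fun u _ => ?_
    rw [hdskew k c u]; ring
  set T : Fin d → Fin d → Fin d → ℝ := fun a k c =>
    fderiv ℝ (fderiv ℝ (fderiv ℝ S)) (0, 0, x) (e d a, 0, 0) (0, e d c, 0) (e d k, 0, 0) with hT
  set R : Fin d → Fin d → Fin d → ℝ := fun a k c =>
    fderiv ℝ (fderiv ℝ (fderiv ℝ S)) (0, 0, x) (e d a, 0, 0) (0, e d c, 0) (0, e d k, 0) with hR
  have hTsymm : ∀ a k c, T a k c = T k a c := by
    intro a k c
    simp only [hT]
    rw [third_symm_right hΩ hS hz, third_symm_left hΩ hS hz, third_symm_right hΩ hS hz]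
  have hRsymm : ∀ a k c, R a k c = R a c k := fun a k c => third_symm_right hΩ hS hz _ _ _
  have hexp : ∀ (v : V d) (w w' : E3 d),
      fderiv ℝ (fderiv ℝ (fderiv ℝ S)) (0, 0, x) (0, 0, v) w w'
        = ∑ u, v u * fderiv ℝ (fderiv ℝ (fderiv ℝ S)) (0, 0, x) (0, 0, e d u) w w' := by
    intro v w w'
    exact apply_trd_eq_sum
      (((fderiv ℝ (fderiv ℝ (fderiv ℝ S)) (0, 0, x)).flip w).flip w') v
  have key : ∀ a k c, -J c a k + 4 * T a k c = J a k c + 4 * R a k c := by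
    intro a k c
    have h3 := third_order_identity hΩ hS hSGS hSGA hx hz a k c
    have hl : 4 * fderiv ℝ (fderiv ℝ (fderiv ℝ S)) (0, 0, x) (e d a, 0, 0)
        (0, 0, fun u => fderiv ℝ (fderiv ℝ S) (0, 0, x) (0, e d c, 0) (e d u, 0, 0))
        (0, e d k, 0) = - J c a k := by
      rw [third_symm_left hΩ hS hz]
      simp only [hJ]
      rw [← Finset.sum_neg_distrib, hexp, Finset.mul_sum]
      refine Finset.sum_congr rfl fun u _ => ?_
      rw [hskew c u, alphaS_eq hΩ hS hz, fderiv_alphaS hΩ hS hz,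
        second_symm hΩ hS hz (0, e d c, 0) (e d u, 0, 0)]
      ring
    have hr : 4 * fderiv ℝ (fderiv ℝ (fderiv ℝ S)) (0, 0, x)
        (0, 0, fun u => fderiv ℝ (fderiv ℝ S) (0, 0, x) (e d a, 0, 0) (0, e d u, 0))
        (0, e d c, 0) (e d k, 0, 0) = J a k c := by
      rw [third_symm_right hΩ hS hz]
      simp only [hJ]
      rw [hexp, Finset.mul_sum]
      refine Finset.sum_congr rfl fun u _ => ?_
      rw [alphaS_eq hΩ hS hz, fderiv_alphaS hΩ hS hz]
      ring
    linarith
  intro k l m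
  have hsum : ∑ u : Fin d,
          (alphaS d S x k u * fderiv ℝ (fun y => alphaS d S y l m) x (e d u)
            + alphaS d S x l u * fderiv ℝ (fun y => alphaS d S y m k) x (e d u)
            + alphaS d S x m u * fderiv ℝ (fun y => alphaS d S y k l) x (e d u))
      = J k l m + J l m k + J m k l := by
    simp only [hJ, Finset.sum_add_distrib]
  rw [hsum]
  -- Antisymmetrising `key` over the six permutations of `k, l, m` removes `T` and `R`.
  linarith [key k l m, key l m k, key m k l, key l k m, key k m l, key m l k,
    hTsymm k l m, hTsymm l m k, hTsymm m k l, hRsymm k l m, hRsymm l m k, hRsymm m k l,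
    hJskew k l m, hJskew l m k, hJskew m k l]
end
end

section
/- Suppose S satisfies the SGA equation and the SGS conditions on U, and define s(p,x) := ∇_{p_2}S(p,0,x) and t(p,x) := ∇_{p_1}S(0,p,x). Then the maps Q(p,x) := ∇_{p_2}S(−p, p, x) and Q̃(p,x) := ∇_{p_1}S(p, −p, x) are local inverses of s and t in the second variable: for all (p,x) in a sufficiently small open neighborhood of {0}×U one has s(p, Q(p,x)) = x and t(p, Q̃(p,x)) = x, and for all (p,q) in a sufficiently small open neighborhood of {0}×U one has Q(p, s(p,q)) = q and Q̃(p, t(p,q)) = q. -/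
/-!
Write `F(p₁,p₂,p₃,x)` for the common value of the two sides of the SGA equation. The implicit
equations for `x̄, p̄, x̃, p̃` say precisely that both sides are stationary in these auxiliary
variables (`hasDerivAt_left`, `hasDerivAt_right`), so differentiating `F` only sees the explicit
variables:
`∇_{p₃}F = ∇_{p₂}S(p̄,p₃,x) = ∇_{p₂}S(p₂,p₃,x̃)`, `∇_{p₁}F = ∇_{p₁}S(p₁,p₂,x̄) = ∇_{p₁}S(p₁,p̃,x)`.
At `(-p,p,0,x)` the SGS conditions force `p̄ = 0`, `p̃ = p`, hence `x̃ = Q(p,x)`, and the first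
identity reads `x = s(p,Q(p,x))`. At `(0,p,-p,x)` they force `p̄ = p`, `p̃ = 0`, hence
`x̄ = Q̃(p,x)`, and the second identity reads `t(p,Q̃(p,x)) = x`. This is `right_inverse`.

Since `s(0,·)` and `t(0,·)` are the identity, `s(p,·)` and `t(p,·)` are locally injective for small
`p`, so these right inverses are left inverses as well (`left_inverse_of_right_inverse`).
-/

noncomputable section

/-- `s(p,x) = ∇_{p₂}S(p,0,x)`. -/
def sourceS (d : ℕ) (S : (Fin d → ℝ) × (Fin d → ℝ) × (Fin d → ℝ) → ℝ)
    (z : (Fin d → ℝ) × (Fin d → ℝ)) : Fin d → ℝ :=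
  fun i => fderiv ℝ S (z.1, (0 : Fin d → ℝ), z.2) (0, e d i, 0)

/-- `t(p,x) = ∇_{p₁}S(0,p,x)`. -/
def targetS (d : ℕ) (S : (Fin d → ℝ) × (Fin d → ℝ) × (Fin d → ℝ) → ℝ)
    (z : (Fin d → ℝ) × (Fin d → ℝ)) : Fin d → ℝ :=
  fun i => fderiv ℝ S ((0 : Fin d → ℝ), z.1, z.2) (e d i, 0, 0)

/-- `Q(p,x) = ∇_{p₂}S(−p,p,x)`. -/
def QS (d : ℕ) (S : (Fin d → ℝ) × (Fin d → ℝ) × (Fin d → ℝ) → ℝ)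
    (z : (Fin d → ℝ) × (Fin d → ℝ)) : Fin d → ℝ :=
  fun i => fderiv ℝ S (-z.1, z.1, z.2) (0, e d i, 0)

/-- `Q̃(p,x) = ∇_{p₁}S(p,−p,x)`. -/
def QtS (d : ℕ) (S : (Fin d → ℝ) × (Fin d → ℝ) × (Fin d → ℝ) → ℝ)
    (z : (Fin d → ℝ) × (Fin d → ℝ)) : Fin d → ℝ :=
  fun i => fderiv ℝ S (z.1, -z.1, z.2) (e d i, 0, 0)

/-- As `S` is smooth, its derivative along `u` may be read off from any function of `τ` agreeing with
`S (z + τ u)` as long as the line stays in `Ω`. -/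
lemma fderiv_eq_of_line {d : ℕ} {Ω : Set ((Fin d → ℝ) × (Fin d → ℝ) × (Fin d → ℝ))}
    (hΩ : IsOpen Ω) {S : (Fin d → ℝ) × (Fin d → ℝ) × (Fin d → ℝ) → ℝ}
    (hS : ContDiffOn ℝ (⊤ : ℕ∞) S Ω) {z u : (Fin d → ℝ) × (Fin d → ℝ) × (Fin d → ℝ)}
    (hz : z ∈ Ω) {g : ℝ → ℝ} {g' : ℝ} (hg : HasDerivAt g g' 0)
    (h : ∀ τ : ℝ, z + τ • u ∈ Ω → S (z + τ • u) = g τ) :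
    fderiv ℝ S z u = g' := by
  have hd : DifferentiableAt ℝ S z :=
    (hS.contDiffAt (hΩ.mem_nhds hz)).differentiableAt (by simp)
  have h1 : HasDerivAt (fun τ : ℝ => S (z + τ • u)) (fderiv ℝ S z u) 0 :=
    hd.hasFDerivAt.hasLineDerivAt u
  have hc : ContinuousAt (fun τ : ℝ => z + τ • u) 0 := by fun_prop
  have he : (fun τ : ℝ => S (z + τ • u)) =ᶠ[nhds 0] g := by
    have : ∀ᶠ τ : ℝ in nhds 0, z + τ • u ∈ Ω :=
      hc.eventually_mem (hΩ.mem_nhds (by simpa using hz))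
    exact this.mono h
  exact h1.unique (hg.congr_of_eventuallyEq he)

lemma hasDerivAt_pairing {d : ℕ} (p x v w : Fin d → ℝ) :
    HasDerivAt (fun τ : ℝ => ∑ i, (p + τ • v) i * (x + τ • w) i)
      (∑ i, (v i * x i + p i * w i)) 0 := by
  refine HasDerivAt.fun_sum fun i _ => ?_
  have h (a b : ℝ) : HasDerivAt (fun τ : ℝ => a + τ * b) b 0 := by
    simpa using ((hasDerivAt_id (0 : ℝ)).mul_const b).const_add a
  simpa using (h (p i) (v i)).fun_mul (h (x i) (w i))

lemma SGS.fderiv_right_zero {d : ℕ} {Ω : Set ((Fin d → ℝ) × (Fin d → ℝ) × (Fin d → ℝ))}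
    (hΩ : IsOpen Ω) {S : (Fin d → ℝ) × (Fin d → ℝ) × (Fin d → ℝ) → ℝ}
    (hS : ContDiffOn ℝ (⊤ : ℕ∞) S Ω) (h : SGS d Ω S) {p x : Fin d → ℝ}
    (hz : (p, 0, x) ∈ Ω) (v w : Fin d → ℝ) :
    fderiv ℝ S (p, 0, x) (v, 0, w) = ∑ i, (v i * x i + p i * w i) := by
  refine fderiv_eq_of_line hΩ hS hz (hasDerivAt_pairing p x v w) fun τ hτ => ?_
  have e1 : ((p, 0, x) : (Fin d → ℝ) × (Fin d → ℝ) × (Fin d → ℝ)) + τ • (v, 0, w)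
      = (p + τ • v, 0, x + τ • w) := by simp
  rw [e1] at hτ ⊢
  exact h.1 _ _ hτ

lemma SGS.fderiv_left_zero {d : ℕ} {Ω : Set ((Fin d → ℝ) × (Fin d → ℝ) × (Fin d → ℝ))}
    (hΩ : IsOpen Ω) {S : (Fin d → ℝ) × (Fin d → ℝ) × (Fin d → ℝ) → ℝ}
    (hS : ContDiffOn ℝ (⊤ : ℕ∞) S Ω) (h : SGS d Ω S) {p x : Fin d → ℝ}
    (hz : (0, p, x) ∈ Ω) (v w : Fin d → ℝ) :
    fderiv ℝ S (0, p, x) (0, v, w) = ∑ i, (v i * x i + p i * w i) := by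
  refine fderiv_eq_of_line hΩ hS hz (hasDerivAt_pairing p x v w) fun τ hτ => ?_
  have e1 : ((0, p, x) : (Fin d → ℝ) × (Fin d → ℝ) × (Fin d → ℝ)) + τ • (0, v, w)
      = (0, p + τ • v, x + τ • w) := by simp
  rw [e1] at hτ ⊢
  exact h.2.1 _ _ hτ

lemma SGS.fderiv_neg {d : ℕ} {Ω : Set ((Fin d → ℝ) × (Fin d → ℝ) × (Fin d → ℝ))}
    (hΩ : IsOpen Ω) {S : (Fin d → ℝ) × (Fin d → ℝ) × (Fin d → ℝ) → ℝ}
    (hS : ContDiffOn ℝ (⊤ : ℕ∞) S Ω) (h : SGS d Ω S) {p x : Fin d → ℝ}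
    (hz : (p, -p, x) ∈ Ω) (w : Fin d → ℝ) :
    fderiv ℝ S (p, -p, x) (0, 0, w) = 0 := by
  refine fderiv_eq_of_line hΩ hS hz (hasDerivAt_const 0 0) fun τ hτ => ?_
  have e1 : ((p, -p, x) : (Fin d → ℝ) × (Fin d → ℝ) × (Fin d → ℝ)) + τ • (0, 0, w)
      = (p, -p, x + τ • w) := by simp
  rw [e1] at hτ ⊢
  exact h.2.2 _ _ hτ

lemma sum_mul_e {d : ℕ} (x : Fin d → ℝ) (k : Fin d) : ∑ i, e d k i * x i = x k := by
  simp [e, Pi.single_apply]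

lemma mul_e_sum {d : ℕ} (x : Fin d → ℝ) (k : Fin d) : ∑ i, x i * e d k i = x k := by
  simp [e, Pi.single_apply]

lemma map_eq_sum_e {d : ℕ} (L : (Fin d → ℝ) →ₗ[ℝ] ℝ) (w : Fin d → ℝ) :
    L w = ∑ k, w k * L (e d k) := by
  conv_lhs => rw [← Finset.univ_sum_single w, map_sum]
  refine Finset.sum_congr rfl fun k _ => ?_
  rw [← smul_eq_mul, ← map_smul]
  congr 1
  ext j
  simp [e, Pi.single_apply]

/-- Splitting of a derivative of `S` into its three partial gradients. -/
lemma fderiv_split {d : ℕ} (L : ((Fin d → ℝ) × (Fin d → ℝ) × (Fin d → ℝ)) →L[ℝ] ℝ)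
    (u v w : Fin d → ℝ) :
    L (u, v, w) = ∑ k, u k * L (e d k, 0, 0) + ∑ k, v k * L (0, e d k, 0)
      + ∑ k, w k * L (0, 0, e d k) := by
  have h1 := map_eq_sum_e (L.toLinearMap ∘ₗ LinearMap.inl ℝ _ _) u
  have h2 := map_eq_sum_e (L.toLinearMap ∘ₗ LinearMap.inr ℝ _ _ ∘ₗ LinearMap.inl ℝ _ _) v
  have h3 := map_eq_sum_e (L.toLinearMap ∘ₗ LinearMap.inr ℝ _ _ ∘ₗ LinearMap.inr ℝ _ _) w
  simp only [LinearMap.comp_apply, LinearMap.inl_apply, LinearMap.inr_apply,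
    ContinuousLinearMap.coe_coe] at h1 h2 h3
  simp only [Prod.zero_eq_mk] at h1
  rw [← h1, ← h2, ← h3, ← map_add, ← map_add]
  simp

/-- The envelope identity behind the argument: in the expression
`S (a, b, X) + S (P, c, y) - X · P`, where the point `(a, b, c, y)` moves, `X = ∇_{p₁}S(P, c, y)`
and `P = ∇_x S(a, b, X)`, the variables `X` and `P` are stationary. -/
lemma hasDerivAt_left {d : ℕ} {S : (Fin d → ℝ) × (Fin d → ℝ) × (Fin d → ℝ) → ℝ}
    {a b c y X P : ℝ → Fin d → ℝ} {a' b' c' y' X' P' : Fin d → ℝ}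
    (ha : HasDerivAt a a' 0) (hb : HasDerivAt b b' 0) (hc : HasDerivAt c c' 0)
    (hy : HasDerivAt y y' 0) (hX : HasDerivAt X X' 0) (hP : HasDerivAt P P' 0)
    (h1 : DifferentiableAt ℝ S (a 0, b 0, X 0)) (h2 : DifferentiableAt ℝ S (P 0, c 0, y 0))
    (eX : ∀ k, X 0 k = fderiv ℝ S (P 0, c 0, y 0) (e d k, 0, 0))
    (eP : ∀ k, P 0 k = fderiv ℝ S (a 0, b 0, X 0) (0, 0, e d k)) :
    HasDerivAt (fun τ => S (a τ, b τ, X τ) + S (P τ, c τ, y τ) - ∑ k, X τ k * P τ k)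
      (fderiv ℝ S (a 0, b 0, X 0) (a', b', 0) + fderiv ℝ S (P 0, c 0, y 0) (0, c', y')) 0 := by
  have k1 := h1.hasFDerivAt.comp_hasDerivAt (0 : ℝ) (ha.prodMk (hb.prodMk hX))
  have k2 := h2.hasFDerivAt.comp_hasDerivAt (0 : ℝ) (hP.prodMk (hc.prodMk hy))
  have k3 : HasDerivAt (fun τ => ∑ k, X τ k * P τ k) (∑ k, (X' k * P 0 k + X 0 k * P' k)) 0 :=
    HasDerivAt.fun_sum fun k _ => ((hasDerivAt_pi.1 hX) k).mul ((hasDerivAt_pi.1 hP) k)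
  refine ((k1.add k2).sub k3).congr_deriv ?_
  rw [fderiv_split _ a' b' X', fderiv_split _ P' c' y', fderiv_split _ a' b' 0, fderiv_split _ 0 c' y']
  simp only [Finset.sum_add_distrib, ← eX, ← eP, Pi.zero_apply, zero_mul, Finset.sum_const_zero]
  simp only [mul_comm (X 0 _)]
  ring

/-- The mirror image of `hasDerivAt_left`, for `S (b, c, X) + S (a, P, y) - X · P` with
`X = ∇_{p₂}S(a, P, y)` and `P = ∇_x S(b, c, X)`. -/
lemma hasDerivAt_right {d : ℕ} {S : (Fin d → ℝ) × (Fin d → ℝ) × (Fin d → ℝ) → ℝ}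
    {a b c y X P : ℝ → Fin d → ℝ} {a' b' c' y' X' P' : Fin d → ℝ}
    (ha : HasDerivAt a a' 0) (hb : HasDerivAt b b' 0) (hc : HasDerivAt c c' 0)
    (hy : HasDerivAt y y' 0) (hX : HasDerivAt X X' 0) (hP : HasDerivAt P P' 0)
    (h1 : DifferentiableAt ℝ S (b 0, c 0, X 0)) (h2 : DifferentiableAt ℝ S (a 0, P 0, y 0))
    (eX : ∀ k, X 0 k = fderiv ℝ S (a 0, P 0, y 0) (0, e d k, 0))
    (eP : ∀ k, P 0 k = fderiv ℝ S (b 0, c 0, X 0) (0, 0, e d k)) :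
    HasDerivAt (fun τ => S (b τ, c τ, X τ) + S (a τ, P τ, y τ) - ∑ k, X τ k * P τ k)
      (fderiv ℝ S (b 0, c 0, X 0) (b', c', 0) + fderiv ℝ S (a 0, P 0, y 0) (a', 0, y')) 0 := by
  have k1 := h1.hasFDerivAt.comp_hasDerivAt (0 : ℝ) (hb.prodMk (hc.prodMk hX))
  have k2 := h2.hasFDerivAt.comp_hasDerivAt (0 : ℝ) (ha.prodMk (hP.prodMk hy))
  have k3 : HasDerivAt (fun τ => ∑ k, X τ k * P τ k) (∑ k, (X' k * P 0 k + X 0 k * P' k)) 0 :=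
    HasDerivAt.fun_sum fun k _ => ((hasDerivAt_pi.1 hX) k).mul ((hasDerivAt_pi.1 hP) k)
  refine ((k1.add k2).sub k3).congr_deriv ?_
  rw [fderiv_split _ b' c' X', fderiv_split _ a' P' y', fderiv_split _ b' c' 0, fderiv_split _ a' 0 y']
  simp only [Finset.sum_add_distrib, ← eX, ← eP, Pi.zero_apply, zero_mul, Finset.sum_const_zero]
  simp only [mul_comm (X 0 _)]
  ring

/-- `s(p, Q(p,x)) = x` and `t(p, Q̃(p,x)) = x` near `(0, x₀)`. The first comes from the derivative of
the additivity equation in `p₃` at `(-p, p, 0, x)`, where `p̄ = 0`, `p̃ = p` and `x̃ = Q(p,x)`; the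
second from its derivative in `p₁` at `(0, p, -p, x)`, where `p̄ = p`, `p̃ = 0` and `x̄ = Q̃(p,x)`. -/
lemma right_inverse {d : ℕ} {U : Set (Fin d → ℝ)}
    {Ω : Set ((Fin d → ℝ) × (Fin d → ℝ) × (Fin d → ℝ))} (hΩ : IsOpen Ω)
    {S : (Fin d → ℝ) × (Fin d → ℝ) × (Fin d → ℝ) → ℝ}
    (hS : ContDiffOn ℝ (⊤ : ℕ∞) S Ω) (hSGS : SGS d Ω S) (hSGA : SGA d U Ω S)
    {x₀ : Fin d → ℝ} (hx₀ : x₀ ∈ U) :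
    ∀ᶠ z : (Fin d → ℝ) × (Fin d → ℝ) in nhds (0, x₀),
      sourceS d S (z.1, QS d S z) = z.2 ∧ targetS d S (z.1, QtS d S z) = z.2 := by
  obtain ⟨W, barx, barp, tilx, tilp, hW, hUW, hbx, hbp, htx, htp, H⟩ := hSGA
  have hdS {z} (hz : z ∈ Ω) : DifferentiableAt ℝ S z :=
    (hS.contDiffAt (hΩ.mem_nhds hz)).differentiableAt (by simp)
  -- The additivity equation at `z`, differentiated along `v`; `x̄, p̄, x̃, p̃` are stationary.
  have key (z : (Fin d → ℝ) × (Fin d → ℝ) × (Fin d → ℝ) × (Fin d → ℝ)) (hz : z ∈ W)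
      (v : (Fin d → ℝ) × (Fin d → ℝ) × (Fin d → ℝ) × (Fin d → ℝ)) :
      fderiv ℝ S (z.1, z.2.1, barx z) (v.1, v.2.1, 0)
        + fderiv ℝ S (barp z, z.2.2.1, z.2.2.2) (0, v.2.2.1, v.2.2.2)
      = fderiv ℝ S (z.2.1, z.2.2.1, tilx z) (v.2.1, v.2.2.1, 0)
        + fderiv ℝ S (z.1, tilp z, z.2.2.2) (v.1, 0, v.2.2.2) := by
    have hline : HasDerivAt (fun τ : ℝ => z + τ • v) v 0 := by
      simpa using ((hasDerivAt_id (0 : ℝ)).smul_const v).const_add z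
    have hz0 : z + (0 : ℝ) • v = z := by simp
    have hcomp {f : (Fin d → ℝ) × (Fin d → ℝ) × (Fin d → ℝ) × (Fin d → ℝ) → (Fin d → ℝ)}
        (hf : ContDiffOn ℝ (⊤ : ℕ∞) f W) :
        HasDerivAt (fun τ : ℝ => f (z + τ • v)) (fderiv ℝ f z v) 0 :=
      (((hf.contDiffAt (hW.mem_nhds hz)).differentiableAt
        (by simp)).hasFDerivAt).hasLineDerivAt v
    have hlin (p x : Fin d → ℝ) : HasDerivAt (fun τ : ℝ => p + τ • x) x 0 := by
      simpa using ((hasDerivAt_id (0 : ℝ)).smul_const x).const_add p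
    obtain ⟨o1, o2, o3, o4, g1, g2, g3, g4, -⟩ := H _ _ _ _ hz
    have A := hasDerivAt_left (S := S) (hlin z.1 v.1) (hlin z.2.1 v.2.1) (hlin z.2.2.1 v.2.2.1)
      (hlin z.2.2.2 v.2.2.2) (hcomp hbx) (hcomp hbp)
      (by simpa using hdS o2) (by simpa using hdS o1) (by simpa using g1) (by simpa using g2)
    have B := hasDerivAt_right (S := S) (hlin z.1 v.1) (hlin z.2.1 v.2.1) (hlin z.2.2.1 v.2.2.1)
      (hlin z.2.2.2 v.2.2.2) (hcomp htx) (hcomp htp)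
      (by simpa using hdS o4) (by simpa using hdS o3) (by simpa using g3) (by simpa using g4)
    have hev : ∀ᶠ τ : ℝ in nhds 0, z + τ • v ∈ W :=
      hline.continuousAt.eventually_mem (hW.mem_nhds (by simpa using hz))
    have := A.unique (B.congr_of_eventuallyEq (hev.mono fun τ hτ => (H _ _ _ _ hτ).2.2.2.2.2.2.2.2))
    simpa using this
  have c1 : ContinuousAt (fun z : (Fin d → ℝ) × (Fin d → ℝ) =>
      (-z.1, z.1, (0 : Fin d → ℝ), z.2)) (0, x₀) := by fun_prop
  have c2 : ContinuousAt (fun z : (Fin d → ℝ) × (Fin d → ℝ) =>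
      ((0 : Fin d → ℝ), z.1, -z.1, z.2)) (0, x₀) := by fun_prop
  filter_upwards [c1.eventually_mem (hW.mem_nhds (by simpa using hUW x₀ hx₀)),
    c2.eventually_mem (hW.mem_nhds (by simpa using hUW x₀ hx₀))]
  rintro ⟨p, x⟩ w1 w2
  constructor
  · obtain ⟨o1, o2, o3, o4, g1, g2, g3, g4, -⟩ := H _ _ _ _ w1
    have K := fun i => key _ w1 (0, 0, e d i, 0)
    simp only at o1 o2 o3 o4 g1 g2 g3 g4 K
    generalize barx (-p, p, 0, x) = X at *
    generalize barp (-p, p, 0, x) = P at *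
    generalize tilx (-p, p, 0, x) = Y at *
    generalize tilp (-p, p, 0, x) = R at *
    have hP : P = 0 := by
      ext k
      have := hSGS.fderiv_neg hΩ hS (p := -p) (x := X) (by simpa using o2) (e d k)
      rw [neg_neg] at this
      rw [g2, this, Pi.zero_apply]
    have hR : R = p := by
      ext k
      rw [g4, hSGS.fderiv_right_zero hΩ hS o4]
      simp [mul_e_sum]
    subst hP hR
    have hY : QS d S (R, x) = Y := by
      ext k
      simp only [QS, g3]
    ext i
    simp only [sourceS, hY]
    have := K i
    have h0 (z : (Fin d → ℝ) × (Fin d → ℝ) × (Fin d → ℝ)) : fderiv ℝ S z (0, 0, 0) = 0 :=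
      map_zero _
    rw [h0, h0, zero_add, add_zero] at this
    rw [← this, hSGS.fderiv_left_zero hΩ hS o1]
    simp [sum_mul_e]
  · obtain ⟨o1, o2, o3, o4, g1, g2, g3, g4, -⟩ := H _ _ _ _ w2
    have K := fun i => key _ w2 (e d i, 0, 0, 0)
    simp only at o1 o2 o3 o4 g1 g2 g3 g4 K
    generalize barx (0, p, -p, x) = X at *
    generalize barp (0, p, -p, x) = P at *
    generalize tilx (0, p, -p, x) = Y at *
    generalize tilp (0, p, -p, x) = R at *
    have hR : R = 0 := by
      ext k
      rw [g4, hSGS.fderiv_neg hΩ hS o4, Pi.zero_apply]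
    have hP : P = p := by
      ext k
      rw [g2, hSGS.fderiv_left_zero hΩ hS o2]
      simp [mul_e_sum]
    subst hP hR
    have hX : QtS d S (P, x) = X := by
      ext k
      simp only [QtS, g1]
    ext i
    simp only [targetS, hX]
    have := K i
    have h0 (z : (Fin d → ℝ) × (Fin d → ℝ) × (Fin d → ℝ)) : fderiv ℝ S z (0, 0, 0) = 0 :=
      map_zero _
    rw [h0, h0, zero_add, add_zero] at this
    rw [this, hSGS.fderiv_right_zero hΩ hS o3]
    simp [sum_mul_e]

/-- A right inverse `g` of `f` in the second variable is also a left inverse near `(0, q₀)` when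
`f (0, ·)` is the identity near `q₀`: the partial derivative of `f` in the second variable is then
the identity at `(0, q₀)`, so `f (p, ·)` is injective near `q₀` for small `p`. -/
lemma left_inverse_of_right_inverse {E : Type*} [NormedAddCommGroup E] [NormedSpace ℝ E]
    {f g : E × E → E} {q₀ : E} (hf : ContDiffAt ℝ 1 f (0, q₀))
    (hf0 : ∀ᶠ q in nhds q₀, f (0, q) = q) (hg : ContinuousAt g (0, q₀)) (hg0 : g (0, q₀) = q₀)
    (hfg : ∀ᶠ z in nhds ((0 : E), q₀), f (z.1, g z) = z.2) :
    ∀ᶠ z in nhds ((0 : E), q₀), g (z.1, f z) = z.2 := by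
  have hst := hf.hasStrictFDerivAt one_ne_zero
  set L := fderiv ℝ f (0, q₀)
  have hL (k : E) : L (0, k) = k := by
    have h1 : HasFDerivAt (fun q : E => f (0, q)) (L.comp (ContinuousLinearMap.inr ℝ E E)) q₀ :=
      hst.hasFDerivAt.comp q₀ (hasFDerivAt_prodMk_right (0 : E) q₀)
    have h2 : HasFDerivAt (fun q : E => f (0, q)) (ContinuousLinearMap.id ℝ E) q₀ :=
      (hasFDerivAt_id q₀).congr_of_eventuallyEq hf0
    simpa using DFunLike.congr_fun (h1.unique h2) k
  have hf00 : f (0, q₀) = q₀ := hf0.self_of_nhds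
  have hΦ : ContinuousAt (fun z : E × E => (z.1, f z)) (0, q₀) :=
    continuousAt_fst.prodMk hf.continuousAt
  have hΦ' : Filter.Tendsto (fun z : E × E => (z.1, f z)) (nhds (0, q₀)) (nhds (0, q₀)) := by
    have := hΦ.tendsto
    rwa [hf00] at this
  have hΨ : Filter.Tendsto (fun z : E × E => ((z.1, g (z.1, f z)), z)) (nhds (0, q₀))
      (nhds ((0, q₀), (0, q₀))) := by
    have h2 : Filter.Tendsto (fun z : E × E => g (z.1, f z)) (nhds (0, q₀)) (nhds q₀) := by
      have := hg.tendsto.comp hΦ'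
      rwa [hg0] at this
    exact (continuousAt_fst.tendsto.prodMk_nhds h2).prodMk_nhds Filter.tendsto_id
  -- Strict differentiability compares `f` at `(p, g (p, f z))` and at `z = (p, q)`, where it takes
  -- equal values; any constant below `1` then forces the two points to coincide.
  have hb := hΨ.eventually (hst.isLittleO.def (c := 1 / 2) (by norm_num))
  filter_upwards [hb, hΦ'.eventually hfg] with z hz1 hz2
  have e1 : (z.1, g (z.1, f z)) - z = (0, g (z.1, f z) - z.2) := by
    ext <;> simp
  rw [e1, hL, hz2, sub_self, zero_sub, norm_neg, Prod.norm_mk, norm_zero,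
    max_eq_right (norm_nonneg _)] at hz1
  have : ‖g (z.1, f z) - z.2‖ = 0 := le_antisymm (by linarith) (norm_nonneg _)
  exact sub_eq_zero.1 (norm_eq_zero.1 this)

/-- If `S` satisfies the SGA equation and the SGS conditions on `U`, then
`Q(p,x) = ∇_{p₂}S(−p,p,x)` and `Q̃(p,x) = ∇_{p₁}S(p,−p,x)` are local inverses
in the second variable of `s(p,x) = ∇_{p₂}S(p,0,x)` and `t(p,x) = ∇_{p₁}S(0,p,x)`:
on a small neighborhood of `{0}×U`, `s(p,Q(p,x)) = x`, `t(p,Q̃(p,x)) = x`,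
`Q(p,s(p,q)) = q` and `Q̃(p,t(p,q)) = q`. -/
theorem Q_is_local_inverse_of_source_and_target
    (d : ℕ) (hd : 1 ≤ d)
    (U : Set (Fin d → ℝ)) (hU : IsOpen U)
    (Ω : Set ((Fin d → ℝ) × (Fin d → ℝ) × (Fin d → ℝ))) (hΩ : IsOpen Ω)
    (hUΩ : ∀ x ∈ U, ((0 : Fin d → ℝ), (0 : Fin d → ℝ), x) ∈ Ω)
    (S : (Fin d → ℝ) × (Fin d → ℝ) × (Fin d → ℝ) → ℝ)
    (hS : ContDiffOn ℝ (⊤ : ℕ∞) S Ω)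
    (hSGS : SGS d Ω S) (hSGA : SGA d U Ω S) :
    (∃ N : Set ((Fin d → ℝ) × (Fin d → ℝ)), IsOpen N ∧
      (∀ x ∈ U, ((0 : Fin d → ℝ), x) ∈ N) ∧
      (∀ p x : Fin d → ℝ, (p, x) ∈ N →
        sourceS d S (p, QS d S (p, x)) = x ∧
        targetS d S (p, QtS d S (p, x)) = x)) ∧
    (∃ N' : Set ((Fin d → ℝ) × (Fin d → ℝ)), IsOpen N' ∧
      (∀ x ∈ U, ((0 : Fin d → ℝ), x) ∈ N') ∧
      (∀ p q : Fin d → ℝ, (p, q) ∈ N' →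
        QS d S (p, sourceS d S (p, q)) = q ∧
        QtS d S (p, targetS d S (p, q)) = q)) := by
  have hR := fun x₀ (hx₀ : x₀ ∈ U) => right_inverse hΩ hS hSGS hSGA hx₀
  have hD (v : (Fin d → ℝ) × (Fin d → ℝ) × (Fin d → ℝ)) :
      ContDiffOn ℝ 1 (fun w => fderiv ℝ S w v) Ω :=
    (hS.fderiv_of_isOpen (m := 1) hΩ (by norm_cast)).clm_apply contDiffOn_const
  have hpi (v : Fin d → (Fin d → ℝ) × (Fin d → ℝ) × (Fin d → ℝ))
      (f : (Fin d → ℝ) × (Fin d → ℝ) → (Fin d → ℝ) × (Fin d → ℝ) × (Fin d → ℝ))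
      (hf : ContDiff ℝ 1 f) (z : (Fin d → ℝ) × (Fin d → ℝ)) (hz : f z ∈ Ω) :
      ContDiffAt ℝ 1 (fun z => fun i => fderiv ℝ S (f z) (v i)) z :=
    contDiffAt_pi.2 fun i => ((hD (v i)).contDiffAt (hΩ.mem_nhds hz)).comp z hf.contDiffAt
  have hQ0 {x} (hx : ((0 : Fin d → ℝ), (0 : Fin d → ℝ), x) ∈ Ω) (i : Fin d) :
      fderiv ℝ S (0, 0, x) (0, e d i, 0) = x i := by
    rw [hSGS.fderiv_left_zero hΩ hS hx]; simp [sum_mul_e]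
  have hT0 {x} (hx : ((0 : Fin d → ℝ), (0 : Fin d → ℝ), x) ∈ Ω) (i : Fin d) :
      fderiv ℝ S (0, 0, x) (e d i, 0, 0) = x i := by
    rw [hSGS.fderiv_right_zero hΩ hS hx]; simp [sum_mul_e]
  have hLft : ∀ x₀ ∈ U, ∀ᶠ z : (Fin d → ℝ) × (Fin d → ℝ) in nhds (0, x₀),
      QS d S (z.1, sourceS d S z) = z.2 ∧ QtS d S (z.1, targetS d S z) = z.2 := by
    intro x₀ hx₀
    have hx := hUΩ x₀ hx₀
    have hev : ∀ᶠ q in nhds x₀, ((0 : Fin d → ℝ), (0 : Fin d → ℝ), q) ∈ Ω :=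
      ContinuousAt.eventually_mem (f := fun q => ((0 : Fin d → ℝ), (0 : Fin d → ℝ), q))
        (by fun_prop) (hΩ.mem_nhds hx)
    refine (left_inverse_of_right_inverse (f := sourceS d S) (g := QS d S) ?_ ?_ ?_ ?_ ?_).and
      (left_inverse_of_right_inverse (f := targetS d S) (g := QtS d S) ?_ ?_ ?_ ?_ ?_)
    · exact hpi (fun i => (0, e d i, 0)) (fun z => (z.1, 0, z.2)) (by fun_prop) _ hx
    · exact hev.mono fun q hq => funext fun i => hQ0 hq i
    · exact (hpi (fun i => (0, e d i, 0)) (fun z => (-z.1, z.1, z.2)) (by fun_prop) _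
        (by simpa using hx)).continuousAt
    · ext i
      simpa [QS] using hQ0 hx i
    · exact (hR x₀ hx₀).mono fun z hz => hz.1
    · exact hpi (fun i => (e d i, 0, 0)) (fun z => (0, z.1, z.2)) (by fun_prop) _ hx
    · exact hev.mono fun q hq => funext fun i => hT0 hq i
    · exact (hpi (fun i => (e d i, 0, 0)) (fun z => (z.1, -z.1, z.2)) (by fun_prop) _
        (by simpa using hx)).continuousAt
    · ext i
      simpa [QtS] using hT0 hx i
    · exact (hR x₀ hx₀).mono fun z hz => hz.2
  have hnhd {P : (Fin d → ℝ) × (Fin d → ℝ) → Prop}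
      (hP : ∀ x ∈ U, ∀ᶠ z in nhds ((0 : Fin d → ℝ), x), P z) :
      ∃ N : Set ((Fin d → ℝ) × (Fin d → ℝ)), IsOpen N ∧
        (∀ x ∈ U, ((0 : Fin d → ℝ), x) ∈ N) ∧ ∀ p x : Fin d → ℝ, (p, x) ∈ N → P (p, x) :=
    ⟨interior {z | P z}, isOpen_interior, fun x hx => mem_interior_iff_mem_nhds.2 (hP x hx),
      fun p x h => (interior_subset h : (p, x) ∈ {z | P z})⟩
  exact ⟨hnhd hR, hnhd hLft⟩
end
end

section
/- Let μ : ℝ^d × ℝ^d → ℝ^d be bilinear, let ⟨·,·⟩ denote the standard inner product and (e_k) the standard basis of ℝ^d, and define S(p_1,p_2,x) := ⟨x, μ(p_1,p_2)⟩. Define p̄ := μ(p_1,p_2), p̃ := μ(p_2,p_3), x̄ ∈ ℝ^d by x̄_k := ⟨x, μ(e_k, p_3)⟩, and x̃ ∈ ℝ^d by x̃_k := ⟨x, μ(p_1, e_k)⟩. Then for all p_1, p_2, p_3, x ∈ ℝ^d these maps satisfy the four implicit SGA equations x̄ = ∇_{p_1}S(p̄, p_3, x), p̄ = ∇_x S(p_1,p_2,x̄),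 x̃ = ∇_{p_2}S(p_1, p̃, x), p̃ = ∇_x S(p_2,p_3,x̃); moreover the SGA additivity equation S(p_1,p_2,x̄) + S(p̄,p_3,x) − x̄·p̄ = S(p_2,p_3,x̃) + S(p_1,p̃,x) − x̃·p̃ holds for all p_1, p_2, p_3, x ∈ ℝ^d if and only if μ is associative, i.e., μ(μ(p_1,p_2),p_3) = μ(p_1, μ(p_2,p_3)) for all p_1, p_2, p_3 ∈ ℝ^d. -/
/-!
The function `S` is linear in each of its three arguments separately, so its derivative in the
direction of a single argument is `S` with that argument replaced by the direction
(`fderiv_Sμ_fst`, `fderiv_Sμ_snd`, `fderiv_Sμ_thd`). Evaluated on basis vectors, this gives the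
four implicit equations. On each side of the additivity equation, the first term cancels against
the subtracted inner product, leaving `⟨x, μ(μ(p₁,p₂),p₃)⟩ = ⟨x, μ(p₁,μ(p₂,p₃))⟩`. This holds for
every `x` exactly when `μ` is associative, since `x` may range over the standard basis.
-/


noncomputable section

/-- `S(p₁,p₂,x) = ⟨x, μ(p₁,p₂)⟩` for a bilinear map `μ`. -/
def Sμ (d : ℕ) (μ : (Fin d → ℝ) →ₗ[ℝ] (Fin d → ℝ) →ₗ[ℝ] (Fin d → ℝ))
    (w : (Fin d → ℝ) × (Fin d → ℝ) × (Fin d → ℝ)) : ℝ :=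
  ∑ k, w.2.2 k * μ w.1 w.2.1 k

/-- `x̄ ∈ ℝ^d`, `x̄_k = ⟨x, μ(e_k, p₃)⟩`. -/
def xbarμ (d : ℕ) (μ : (Fin d → ℝ) →ₗ[ℝ] (Fin d → ℝ) →ₗ[ℝ] (Fin d → ℝ))
    (p₃ x : Fin d → ℝ) : Fin d → ℝ :=
  fun k => ∑ i, x i * μ (e d k) p₃ i

/-- `x̃ ∈ ℝ^d`, `x̃_k = ⟨x, μ(p₁, e_k)⟩`. -/
def xtilμ (d : ℕ) (μ : (Fin d → ℝ) →ₗ[ℝ] (Fin d → ℝ) →ₗ[ℝ] (Fin d → ℝ))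
    (p₁ x : Fin d → ℝ) : Fin d → ℝ :=
  fun k => ∑ i, x i * μ p₁ (e d k) i

theorem differentiable_Sμ (d : ℕ) (μ : (Fin d → ℝ) →ₗ[ℝ] (Fin d → ℝ) →ₗ[ℝ] (Fin d → ℝ)) :
    Differentiable ℝ (Sμ d μ) := by
  -- In finite dimension `μ` is a continuous bilinear map.
  let B : (Fin d → ℝ) →L[ℝ] (Fin d → ℝ) →L[ℝ] (Fin d → ℝ) :=
    LinearMap.toContinuousLinearMap (LinearMap.toContinuousLinearMap.toLinearMap ∘ₗ μ)
  have hB : Sμ d μ = fun w => ∑ k, w.2.2 k * B w.1 w.2.1 k := rfl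
  rw [hB]
  fun_prop

/-- If `S` is affine with slope `c` along the line `w + t v`, then `c` is the
derivative of `S` at `w` in the direction `v`. -/
theorem fderiv_Sμ_of_affine (d : ℕ) (μ : (Fin d → ℝ) →ₗ[ℝ] (Fin d → ℝ) →ₗ[ℝ] (Fin d → ℝ))
    (w v : (Fin d → ℝ) × (Fin d → ℝ) × (Fin d → ℝ)) (c : ℝ)
    (h : ∀ t : ℝ, Sμ d μ (w + t • v) = Sμ d μ w + t * c) :
    fderiv ℝ (Sμ d μ) w v = c := by
  rw [← (differentiable_Sμ d μ w).lineDeriv_eq_fderiv]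
  simp only [lineDeriv, h]
  simp

theorem fderiv_Sμ_fst (d : ℕ) (μ : (Fin d → ℝ) →ₗ[ℝ] (Fin d → ℝ) →ₗ[ℝ] (Fin d → ℝ))
    (a b x v : Fin d → ℝ) :
    fderiv ℝ (Sμ d μ) (a, b, x) (v, 0, 0) = Sμ d μ (v, b, x) := by
  refine fderiv_Sμ_of_affine d μ _ _ _ fun t => ?_
  simp only [Sμ, Finset.mul_sum, ← Finset.sum_add_distrib]
  refine Finset.sum_congr rfl fun k _ => ?_
  simp
  ring

theorem fderiv_Sμ_snd (d : ℕ) (μ : (Fin d → ℝ) →ₗ[ℝ] (Fin d → ℝ) →ₗ[ℝ] (Fin d → ℝ))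
    (a b x v : Fin d → ℝ) :
    fderiv ℝ (Sμ d μ) (a, b, x) (0, v, 0) = Sμ d μ (a, v, x) := by
  refine fderiv_Sμ_of_affine d μ _ _ _ fun t => ?_
  simp only [Sμ, Finset.mul_sum, ← Finset.sum_add_distrib]
  refine Finset.sum_congr rfl fun k _ => ?_
  simp
  ring

theorem fderiv_Sμ_thd (d : ℕ) (μ : (Fin d → ℝ) →ₗ[ℝ] (Fin d → ℝ) →ₗ[ℝ] (Fin d → ℝ))
    (a b x v : Fin d → ℝ) :
    fderiv ℝ (Sμ d μ) (a, b, x) (0, 0, v) = Sμ d μ (a, b, v) := by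
  refine fderiv_Sμ_of_affine d μ _ _ _ fun t => ?_
  simp only [Sμ, Finset.mul_sum, ← Finset.sum_add_distrib]
  refine Finset.sum_congr rfl fun k _ => ?_
  simp
  ring

/-- Pairing with a basis vector reads off a coordinate of `μ(a,b)`. -/
theorem Sμ_e (d : ℕ) (μ : (Fin d → ℝ) →ₗ[ℝ] (Fin d → ℝ) →ₗ[ℝ] (Fin d → ℝ))
    (a b : Fin d → ℝ) (k : Fin d) : Sμ d μ (a, b, e d k) = μ a b k := by
  simp [Sμ, e, Pi.single_apply]

/-- For `S(p₁,p₂,x) = ⟨x, μ(p₁,p₂)⟩` with `μ` bilinear, the maps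
`p̄ = μ(p₁,p₂)`, `p̃ = μ(p₂,p₃)`, `x̄_k = ⟨x, μ(e_k,p₃)⟩`, `x̃_k = ⟨x, μ(p₁,e_k)⟩`
always satisfy the four implicit SGA equations, and the SGA additivity
equation holds for all `p₁, p₂, p₃, x` iff `μ` is associative. -/
theorem bilinear_S_SGA_iff_associative
    (d : ℕ) (hd : 1 ≤ d)
    (μ : (Fin d → ℝ) →ₗ[ℝ] (Fin d → ℝ) →ₗ[ℝ] (Fin d → ℝ)) :
    (∀ p₁ p₂ p₃ x : Fin d → ℝ,
      (∀ k, xbarμ d μ p₃ x k = fderiv ℝ (Sμ d μ) (μ p₁ p₂, p₃, x) (e d k, 0, 0)) ∧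
      (∀ k, μ p₁ p₂ k = fderiv ℝ (Sμ d μ) (p₁, p₂, xbarμ d μ p₃ x) (0, 0, e d k)) ∧
      (∀ k, xtilμ d μ p₁ x k = fderiv ℝ (Sμ d μ) (p₁, μ p₂ p₃, x) (0, e d k, 0)) ∧
      (∀ k, μ p₂ p₃ k = fderiv ℝ (Sμ d μ) (p₂, p₃, xtilμ d μ p₁ x) (0, 0, e d k))) ∧
    ((∀ p₁ p₂ p₃ x : Fin d → ℝ,
        Sμ d μ (p₁, p₂, xbarμ d μ p₃ x) + Sμ d μ (μ p₁ p₂, p₃, x)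
            - ∑ k, xbarμ d μ p₃ x k * μ p₁ p₂ k
          = Sμ d μ (p₂, p₃, xtilμ d μ p₁ x) + Sμ d μ (p₁, μ p₂ p₃, x)
            - ∑ k, xtilμ d μ p₁ x k * μ p₂ p₃ k)
      ↔ (∀ p₁ p₂ p₃ : Fin d → ℝ, μ (μ p₁ p₂) p₃ = μ p₁ (μ p₂ p₃))) := by
  refine ⟨fun p₁ p₂ p₃ x => ⟨fun k => ?_, fun k => ?_, fun k => ?_, fun k => ?_⟩,
    fun h p₁ p₂ p₃ => ?_, fun h p₁ p₂ p₃ x => ?_⟩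
  · rw [fderiv_Sμ_fst]; rfl
  · rw [fderiv_Sμ_thd, Sμ_e]
  · rw [fderiv_Sμ_snd]; rfl
  · rw [fderiv_Sμ_thd, Sμ_e]
  · funext k
    have hk := h p₁ p₂ p₃ (e d k)
    rw [Sμ_e, Sμ_e] at hk
    simp only [Sμ] at hk
    linarith
  · simp only [Sμ, h]
    ring
end
end

section
/- Let z' = a' + ib' and z'' = a'' + ib'' with b', b'' > 0, let φ₁, φ₂ ∈ (0, π), and assume (z', φ₁) ≠ (z'', φ₂). Then the set of points x + iy with y > 0 satisfying both equations y² + 2 cot(φ₁)(x − a')y − (x − a')² = b'² and y² + 2 cot(φ₂)(x − a'')y − (x − a'')² = b''², i.e., the intersection L(z',φ₁) ∩ L(z'',φ₂) of the two hyperbolic-angle loci, contains at most four points. -/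
/-!
Translate so that `a' = 0`, and write `t` for the abscissa, `c₁, c₂` for the two cotangents,
`δ = a' - a''`. The difference of the two equations is affine in `y`: it reads `y * M = N`, where
`M = 2 (c₁ - c₂) t - 2 c₂ δ` and `N = -(2 δ t + δ² - b'² + b''²)` are affine in `t`. Multiplying the
first equation by `M²` eliminates `y` and leaves `N² + 2 c₁ t N M - (t² + b'²) M² = 0`, a polynomial
equation of degree at most four in `t`. This polynomial vanishes identically only if the two loci
have the same data (`locusResultant_ne_zero`), so there are at most four abscissae. Finally, above
each abscissa a locus has exactly one point with `y > 0`, because the product of the two roots of the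
equation in `y` is `-(t² + b²) < 0` (`HypLocus.im_eq`).
-/

noncomputable section

/-- The branch of a hyperbola `{ x + iy : y > 0, y² + 2cot(φ)(x−a)y − (x−a)² = b² }`,
which is the locus of upper half-plane points seen from some real point `C`
equidistant from `a + ib` under the angle `φ`. -/
def HypLocus (a b φ : ℝ) : Set ℂ :=
  {w : ℂ | 0 < w.im ∧
    w.im ^ 2 + 2 * (Real.cos φ / Real.sin φ) * (w.re - a) * w.im
      - (w.re - a) ^ 2 = b ^ 2}

open Polynomial in
/-- The polynomial `N² + 2 c₁ t N M - (t² + b²) M²` in `t` obtained by eliminating `y` from the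
equation `y² + 2 c₁ t y - t² = b²` and the relation `y * M = N`, with `M = 2 (c₁ - c₂) t - 2 c₂ δ` and
`N = -(2 δ t + f)`. It is written out by coefficients. -/
def locusResultant (c₁ c₂ δ f b : ℝ) : ℝ[X] :=
  C (-4 * (c₁ - c₂) ^ 2) * X ^ 4
    + C (-8 * c₁ * δ * (c₁ - c₂) + 8 * (c₁ - c₂) * c₂ * δ) * X ^ 3
    + C (4 * δ ^ 2 - 2 * c₁ * (-4 * c₂ * δ ^ 2 + 2 * f * (c₁ - c₂)) - 4 * c₂ ^ 2 * δ ^ 2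
        - 4 * b ^ 2 * (c₁ - c₂) ^ 2) * X ^ 2
    + C (4 * δ * f + 4 * c₁ * f * c₂ * δ + 8 * b ^ 2 * (c₁ - c₂) * c₂ * δ) * X
    + C (f ^ 2 - 4 * b ^ 2 * c₂ ^ 2 * δ ^ 2)

lemma natDegree_locusResultant_le (c₁ c₂ δ f b : ℝ) :
    (locusResultant c₁ c₂ δ f b).natDegree ≤ 4 := by
  unfold locusResultant
  compute_degree

lemma locusResultant_ne_zero {c₁ c₂ δ f : ℝ} (b : ℝ) (h : ¬(c₁ = c₂ ∧ δ = 0 ∧ f = 0)) :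
    locusResultant c₁ c₂ δ f b ≠ 0 := by
  intro h0
  have e4 := congrArg (fun p => Polynomial.coeff p 4) h0
  have e2 := congrArg (fun p => Polynomial.coeff p 2) h0
  have e0 := congrArg (fun p => Polynomial.coeff p 0) h0
  simp only [locusResultant, Polynomial.coeff_add, Polynomial.coeff_C_mul, Polynomial.coeff_X_pow,
    Polynomial.coeff_X, Polynomial.coeff_C, Polynomial.coeff_zero] at e4 e2 e0
  norm_num at e4 e2 e0
  have hc : c₁ = c₂ := by linarith
  subst hc
  -- Once `c₁ = c₂`, the coefficient of `t²` is `4 (1 + c₁²) δ²`.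
  have hδ : δ = 0 := by
    have : (1 + c₁ ^ 2) * δ ^ 2 = 0 := by linear_combination e2 / 4
    have h1 : (1 + c₁ ^ 2) ≠ 0 := by positivity
    simpa [h1] using this
  subst hδ
  have hf : f = 0 := by simpa using e0
  exact h ⟨rfl, rfl, hf⟩

/-- The abscissa of a common point, measured from that of the first base point, is a root of the
resultant. -/
lemma isRoot_locusResultant {c₁ c₂ δ b₁ b₂ t y : ℝ}
    (h₁ : y ^ 2 + 2 * c₁ * t * y - t ^ 2 = b₁ ^ 2)
    (h₂ : y ^ 2 + 2 * c₂ * (t + δ) * y - (t + δ) ^ 2 = b₂ ^ 2) :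
    (locusResultant c₁ c₂ δ (δ ^ 2 - b₁ ^ 2 + b₂ ^ 2) b₁).IsRoot t := by
  obtain ⟨f, hf⟩ : ∃ f, f = δ ^ 2 - b₁ ^ 2 + b₂ ^ 2 := ⟨_, rfl⟩
  obtain ⟨M, hM⟩ : ∃ M, M = 2 * (c₁ - c₂) * t - 2 * c₂ * δ := ⟨_, rfl⟩
  obtain ⟨N, hN⟩ : ∃ N, N = -(2 * δ * t + f) := ⟨_, rfl⟩
  have hyM : y * M = N := by
    rw [hM, hN, hf]
    linear_combination h₁ - h₂
  have key : N ^ 2 + 2 * c₁ * t * N * M - (t ^ 2 + b₁ ^ 2) * M ^ 2 = 0 := by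
    rw [← hyM]
    linear_combination M ^ 2 * h₁
  rw [← hf]
  simp only [Polynomial.IsRoot.def, locusResultant, Polynomial.eval_add, Polynomial.eval_mul,
    Polynomial.eval_C, Polynomial.eval_pow, Polynomial.eval_X]
  rw [hM, hN] at key
  linear_combination key

/-- The ordinate of a point of a locus is the larger root of a quadratic in `y` whose roots have
opposite signs; hence it is determined by the abscissa. -/
lemma HypLocus.im_eq {a b φ : ℝ} (hb : 0 < b) {w z : ℂ} (hw : w ∈ HypLocus a b φ)
    (hz : z ∈ HypLocus a b φ) (h : w.re = z.re) : w.im = z.im := by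
  obtain ⟨hw0, hw⟩ := hw
  obtain ⟨hz0, hz⟩ := hz
  rw [h] at hw
  set t := z.re - a
  set c := Real.cos φ / Real.sin φ
  -- If `w.im ≠ z.im`, then by Vieta their product would be `-(t² + b²)`.
  have hprod : (w.im - z.im) * (w.im * z.im + t ^ 2 + b ^ 2) = 0 := by
    linear_combination z.im * hw - w.im * hz
  have hpos : w.im * z.im + t ^ 2 + b ^ 2 ≠ 0 := by positivity
  have := (mul_eq_zero.mp hprod).resolve_right hpos
  linarith

lemma eq_of_cos_div_sin_eq {φ₁ φ₂ : ℝ} (hφ₁ : φ₁ ∈ Set.Ioo 0 Real.pi)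
    (hφ₂ : φ₂ ∈ Set.Ioo 0 Real.pi)
    (h : Real.cos φ₁ / Real.sin φ₁ = Real.cos φ₂ / Real.sin φ₂) : φ₁ = φ₂ := by
  have s₁ := Real.sin_pos_of_mem_Ioo hφ₁
  have s₂ := Real.sin_pos_of_mem_Ioo hφ₂
  rw [div_eq_div_iff s₁.ne' s₂.ne'] at h
  have hs : Real.sin (φ₁ - φ₂) = 0 := by
    rw [Real.sin_sub]
    linear_combination -h
  have := (Real.sin_eq_zero_iff_of_lt_of_lt (by linarith [hφ₁.1, hφ₂.2])
    (by linarith [hφ₁.2, hφ₂.1])).mp hs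
  linarith

/-- Two distinct hyperbolic-angle loci, for `z' = a' + ib'`, `z'' = a'' + ib''`
in the upper half-plane and angles `φ₁, φ₂ ∈ (0,π)` with `(z',φ₁) ≠ (z'',φ₂)`,
intersect in at most four points. -/
theorem locus_intersection_at_most_four
    (a' b' a'' b'' φ₁ φ₂ : ℝ) (hb' : 0 < b') (hb'' : 0 < b'')
    (hφ₁ : φ₁ ∈ Set.Ioo 0 Real.pi) (hφ₂ : φ₂ ∈ Set.Ioo 0 Real.pi)
    (hne : ¬(a' = a'' ∧ b' = b'' ∧ φ₁ = φ₂)) :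
    ∃ F : Finset ℂ, F.card ≤ 4 ∧
      HypLocus a' b' φ₁ ∩ HypLocus a'' b'' φ₂ ⊆ (F : Set ℂ) := by
  classical
  set c₁ := Real.cos φ₁ / Real.sin φ₁ with hc₁
  set c₂ := Real.cos φ₂ / Real.sin φ₂ with hc₂
  set p := locusResultant c₁ c₂ (a' - a'') ((a' - a'') ^ 2 - b' ^ 2 + b'' ^ 2) b' with hp
  have hp0 : p ≠ 0 := by
    refine locusResultant_ne_zero _ ?_
    rintro ⟨hc, hδ, hf⟩
    refine hne ⟨sub_eq_zero.mp hδ, ?_, eq_of_cos_div_sin_eq hφ₁ hφ₂ hc⟩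
    rw [hδ] at hf
    exact (sq_eq_sq₀ hb'.le hb''.le).mp (by linarith)
  set S := HypLocus a' b' φ₁ ∩ HypLocus a'' b'' φ₂ with hS
  have hmaps : Set.MapsTo (fun w : ℂ => w.re - a') S (p.roots.toFinset : Set ℝ) := by
    rintro w ⟨⟨-, h₁⟩, -, h₂⟩
    simp only [Finset.mem_coe, Multiset.mem_toFinset, Polynomial.mem_roots hp0]
    refine isRoot_locusResultant (y := w.im) (b₂ := b'') h₁ ?_
    linear_combination h₂
  have hinj : Set.InjOn (fun w : ℂ => w.re - a') S := by
    intro w hw z hz h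
    have hre : w.re = z.re := sub_left_injective h
    exact Complex.ext hre (HypLocus.im_eq hb' hw.1 hz.1 hre)
  have hfin : S.Finite := Set.Finite.of_injOn hmaps hinj (Finset.finite_toSet _)
  refine ⟨hfin.toFinset, ?_, by simp⟩
  calc hfin.toFinset.card ≤ p.roots.toFinset.card :=
        Finset.card_le_card_of_injOn _ (by simpa using hmaps) (by simpa using hinj)
    _ ≤ p.roots.card := Multiset.toFinset_card_le _
    _ ≤ p.natDegree := p.card_roots'
    _ ≤ 4 := natDegree_locusResultant_le _ _ _ _ _
end
end

section
/- Let d ≥ 1 and let C = (C_1,…,C_d) : ℝ^d → ℝ^d be a smooth map such that its Jacobian matrix is symmetric at every point, i.e., ∂C_i/∂p_j (p) = ∂C_j/∂p_i (p) for all p ∈ ℝ^d and all i, j, and such that ⟨C(λp), p⟩ = 0 for all p ∈ ℝ^d and all λ ∈ ℝ, where ⟨·,·⟩ is the standard inner product. Then C is identically zero. -/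
/-! Taking the derivative of `⟨C(q), q⟩ = 0` and using the symmetry of the Jacobian shows that
each component of `C` satisfies Euler's relation of degree `-1` (`fderiv_apply_self_eq_neg`). Hence
`t ↦ t C_j(t p)` has zero derivative on all of `ℝ`; being constant, it has the same value at `t = 1`
as at `t = 0`, namely `0`. -/

noncomputable section

/-- The Euler-type relation `q · ∇C_j(q) = -C_j(q)`: differentiate `∑ C_i(q) q_i = 0` in the
direction `e_j` and exchange the indices of the Jacobian. -/
theorem fderiv_apply_self_eq_neg (d : ℕ) (C : (Fin d → ℝ) → (Fin d → ℝ))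
    (hd : ∀ i, Differentiable ℝ (fun q => C q i))
    (hsym : ∀ (p : Fin d → ℝ) (i j : Fin d),
      fderiv ℝ (fun q => C q i) p (e d j) = fderiv ℝ (fun q => C q j) p (e d i))
    (h0 : ∀ q : Fin d → ℝ, ∑ i, C q i * q i = 0) (q : Fin d → ℝ) (j : Fin d) :
    fderiv ℝ (fun q => C q j) q q = -C q j := by
  have h1 : HasFDerivAt (fun q : Fin d → ℝ => ∑ i, C q i * q i)
      (∑ i, (C q i • ContinuousLinearMap.proj (R := ℝ) (φ := fun _ : Fin d => ℝ) i
        + q i • fderiv ℝ (fun q => C q i) q)) q :=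
    HasFDerivAt.fun_sum fun i _ =>
      ((hd i) q).hasFDerivAt.mul (hasFDerivAt_apply i q)
  simp only [h0] at h1
  have h2 := congrArg (fun L => L (e d j)) (h1.unique (hasFDerivAt_const 0 q))
  have h3 : fderiv ℝ (fun q => C q j) q q
      = ∑ i, q i * fderiv ℝ (fun q => C q j) q (e d i) := by
    refine (congrArg (fderiv ℝ (fun q => C q j) q) (pi_eq_sum_univ' q)).trans ?_
    rw [map_sum]
    refine Finset.sum_congr rfl fun i _ => ?_
    rw [map_smul, smul_eq_mul]
    rfl
  have h4 : ∑ i, C q i * e d j i = C q j := by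
    simp [e, Pi.single_apply]
  simp only [_root_.sum_apply, _root_.add_apply,
    _root_.smul_apply, ContinuousLinearMap.proj_apply, smul_eq_mul,
    _root_.zero_apply, Finset.sum_add_distrib, h4, hsym q _ j] at h2
  rw [h3]
  linarith

/-- A smooth map `C : ℝ^d → ℝ^d` with symmetric Jacobian everywhere and
`⟨C(λp), p⟩ = 0` for all `p` and all `λ` is identically zero. -/
theorem symmetric_jacobian_orthogonal_to_rays_eq_zero
    (d : ℕ) (hd : 1 ≤ d)
    (C : (Fin d → ℝ) → (Fin d → ℝ))
    (hC : ContDiff ℝ (⊤ : ℕ∞) C)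
    (hsym : ∀ (p : Fin d → ℝ) (i j : Fin d),
      fderiv ℝ (fun q => C q i) p (e d j) = fderiv ℝ (fun q => C q j) p (e d i))
    (horth : ∀ (p : Fin d → ℝ) (lam : ℝ), ∑ i, C (lam • p) i * p i = 0) :
    ∀ p : Fin d → ℝ, C p = 0 := by
  intro p
  ext j
  have hdiff : ∀ i, Differentiable ℝ (fun q => C q i) := fun i =>
    differentiable_pi.1 (hC.differentiable (by simp)) i
  have h0 : ∀ q : Fin d → ℝ, ∑ i, C q i * q i = 0 := fun q => by simpa using horth q 1
  have hderiv : ∀ t : ℝ, HasDerivAt (fun t : ℝ => t * C (t • p) j) 0 t := by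
    intro t
    have hray : HasDerivAt (fun t : ℝ => t • p) p t := by
      simpa using (hasDerivAt_id t).smul_const p
    have h := (hasDerivAt_id t).mul
      (((hdiff j) (t • p)).hasFDerivAt.comp_hasDerivAt t hray)
    have hE := fderiv_apply_self_eq_neg d C hdiff hsym h0 (t • p) j
    rw [map_smul, smul_eq_mul] at hE
    refine h.congr_deriv ?_
    simp only [id, Function.comp_apply]
    linarith
  have hconst := is_const_of_deriv_eq_zero (fun t => (hderiv t).differentiableAt)
    (fun t => (hderiv t).deriv) 1 0
  simpa using hconst
end
end

section
/- Let d ≥ 1 and let W ⊆ ℝ^d × ℝ^d be a convex open set, with points written (p, q). Let ψ : W → ℝ^d be smooth and suppose that the map Φ(p,q) := (p, ψ(p,q)) preserves the canonical symplectic form Σ_{u=1}^d dp_u ∧ dq_u, i.e., DΦ(p,q)ᵀ J DΦ(p,q) = J for all (p,q) ∈ W, where J is the standard 2d×2d symplectic matrix. Then at every point of W one has ∂ψ_i/∂q_j = δ_{ij} and the matrix (∂ψ_i/∂p_j)_{i,j} is symmetric; consequently there is a smooth map C defined on the projection of W to the p-variables, with symmetric Jacobian, such that ψ(p,q) = q +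 C(p) for all (p,q) ∈ W. -/
/-!
Evaluate the identity `ω(DΦ v, DΦ w) = ω(v, w)` on special vectors. With `v = (e_i, 0)` and
`w = (0, b)` it reads `(∂_q ψ · b)_i = b_i`, so `∂ψ/∂q` is the identity
(`fderiv_snd_of_symplPair`); with `v = (e_i, 0)` and `w = (e_j, 0)` it says that `∂ψ/∂p` is
symmetric (`fderiv_fst_of_symplPair`). Hence `q ↦ ψ(p, q) - q` has zero derivative on the slice
`{q | (p, q) ∈ W}`, which is open and convex, so it is a constant `C(p)`
(`sub_snd_eq_of_fst_eq`). Near `z₀.1`, for `z₀ ∈ W`, this gives `C(p) = ψ(p, z₀.2) - z₀.2`, a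
formula from which `C` inherits smoothness and the symmetry of its Jacobian.
-/

noncomputable section

/-- The canonical symplectic pairing `ω = Σ_u dp_u ∧ dq_u` on `ℝ^d × ℝ^d`,
evaluated on a pair of tangent vectors `v = (v₁, v₂)`, `w = (w₁, w₂)`;
in matrix form this is `vᵀ J w` for the standard symplectic matrix `J`. -/
def symplPair (d : ℕ) (v w : (Fin d → ℝ) × (Fin d → ℝ)) : ℝ :=
  ∑ u : Fin d, (v.1 u * w.2 u - v.2 u * w.1 u)

theorem symplPair_e_left (d : ℕ) (i : Fin d) (a : Fin d → ℝ) (w : (Fin d → ℝ) × (Fin d → ℝ)) :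
    symplPair d (e d i, a) w = w.2 i - ∑ u, a u * w.1 u := by
  simp [symplPair, e, Finset.sum_sub_distrib, Pi.single_apply]

/-- A linear map `L` (the differential of `ψ`) for which `(p, q) ↦ (p, L (p, q))` is symplectic
restricts to the identity on vertical vectors. -/
theorem fderiv_snd_of_symplPair {d : ℕ}
    {L : (Fin d → ℝ) × (Fin d → ℝ) →L[ℝ] (Fin d → ℝ)}
    (h : ∀ v w : (Fin d → ℝ) × (Fin d → ℝ),
      symplPair d (v.1, L v) (w.1, L w) = symplPair d v w) (b : Fin d → ℝ) :
    L (0, b) = b := by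
  ext i
  have := h (e d i, 0) (0, b)
  simpa [symplPair_e_left] using this

/-- A linear map `L` for which `(p, q) ↦ (p, L (p, q))` is symplectic has a symmetric matrix on
horizontal vectors. -/
theorem fderiv_fst_of_symplPair {d : ℕ}
    {L : (Fin d → ℝ) × (Fin d → ℝ) →L[ℝ] (Fin d → ℝ)}
    (h : ∀ v w : (Fin d → ℝ) × (Fin d → ℝ),
      symplPair d (v.1, L v) (w.1, L w) = symplPair d v w) (i j : Fin d) :
    L (e d j, 0) i = L (e d i, 0) j := by
  have := h (e d i, 0) (e d j, 0)
  rw [symplPair_e_left, symplPair_e_left] at this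
  simpa [e, Pi.single_apply, sub_eq_zero] using this

/-- If `∂ψ/∂q` is the identity on a convex open set, then `ψ(p, q) - q` depends on `p` only. -/
theorem sub_snd_eq_of_fst_eq {d : ℕ} {W : Set ((Fin d → ℝ) × (Fin d → ℝ))}
    (hWo : IsOpen W) (hWc : Convex ℝ W) {ψ : (Fin d → ℝ) × (Fin d → ℝ) → (Fin d → ℝ)}
    (hψ : ∀ z ∈ W, DifferentiableAt ℝ ψ z)
    (hq : ∀ z ∈ W, ∀ b : Fin d → ℝ, fderiv ℝ ψ z (0, b) = b)
    {p q q' : Fin d → ℝ} (h : (p, q) ∈ W) (h' : (p, q') ∈ W) :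
    ψ (p, q) - q = ψ (p, q') - q' := by
  have hSo : IsOpen {y : Fin d → ℝ | (p, y) ∈ W} := hWo.preimage (by fun_prop)
  have hSc : Convex ℝ {y : Fin d → ℝ | (p, y) ∈ W} := by
    intro x hx y hy a b ha hb hab
    have := hWc hx hy ha hb hab
    simpa [← add_smul, hab] using this
  have hd : ∀ y ∈ {y : Fin d → ℝ | (p, y) ∈ W},
      HasFDerivAt (fun y => ψ (p, y) - y) (0 : (Fin d → ℝ) →L[ℝ] (Fin d → ℝ)) y := by
    intro y hy
    have h1 := (((hψ _ hy).hasFDerivAt).comp y (hasFDerivAt_prodMk_right p y)).sub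
      (hasFDerivAt_id y)
    refine h1.congr_fderiv ?_
    ext b : 1
    simp [hq _ hy]
  exact hSo.is_const_of_fderiv_eq_zero hSc.isPreconnected
    (fun y hy => (hd y hy).differentiableAt.differentiableWithinAt)
    (fun y hy => (hd y hy).fderiv) h h'

/-- If `Φ(p,q) = (p, ψ(p,q))` preserves the canonical symplectic form on a
convex open set `W` (`DΦᵀ J DΦ = J`, i.e. `ω(DΦ v, DΦ w) = ω(v,w)`), then
`∂ψ_i/∂q_j = δ_{ij}`, the matrix `(∂ψ_i/∂p_j)` is symmetric, and
`ψ(p,q) = q + C(p)` for a smooth map `C`, with symmetric Jacobian, defined on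
the projection of `W` to the `p`-variables. -/
theorem triangular_symplectomorphism_structure
    (d : ℕ) (hd : 1 ≤ d)
    (W : Set ((Fin d → ℝ) × (Fin d → ℝ))) (hWo : IsOpen W) (hWc : Convex ℝ W)
    (ψ : (Fin d → ℝ) × (Fin d → ℝ) → (Fin d → ℝ))
    (hψ : ContDiffOn ℝ (⊤ : ℕ∞) ψ W)
    (hsymp : ∀ z ∈ W, ∀ v w : (Fin d → ℝ) × (Fin d → ℝ),
      symplPair d (v.1, fderiv ℝ ψ z v) (w.1, fderiv ℝ ψ z w) = symplPair d v w) :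
    (∀ z ∈ W, ∀ i j : Fin d,
      fderiv ℝ (fun y => ψ y i) z (0, e d j) = (if i = j then (1 : ℝ) else 0) ∧
      fderiv ℝ (fun y => ψ y i) z (e d j, 0) = fderiv ℝ (fun y => ψ y j) z (e d i, 0)) ∧
    ∃ C : (Fin d → ℝ) → (Fin d → ℝ),
      ContDiffOn ℝ (⊤ : ℕ∞) C (Prod.fst '' W) ∧
      (∀ p ∈ Prod.fst '' W, ∀ i j : Fin d,
        fderiv ℝ (fun y => C y i) p (e d j) = fderiv ℝ (fun y => C y j) p (e d i)) ∧
      (∀ z ∈ W, ψ z = z.2 + C z.1) := by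
  classical
  have hdiff : ∀ z ∈ W, DifferentiableAt ℝ ψ z := fun z hz =>
    (hψ.contDiffAt (hWo.mem_nhds hz)).differentiableAt (by simp)
  have hcoord : ∀ z ∈ W, ∀ (i : Fin d) v,
      fderiv ℝ (fun y => ψ y i) z v = fderiv ℝ ψ z v i := fun z hz i v => by
    rw [fderiv_apply (hdiff z hz)]; rfl
  have hq : ∀ z ∈ W, ∀ b : Fin d → ℝ, fderiv ℝ ψ z (0, b) = b := fun z hz =>
    fderiv_snd_of_symplPair (hsymp z hz)
  have hp : ∀ z ∈ W, ∀ i j : Fin d,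
      fderiv ℝ ψ z (e d j, 0) i = fderiv ℝ ψ z (e d i, 0) j := fun z hz =>
    fderiv_fst_of_symplPair (hsymp z hz)
  refine ⟨fun z hz i j => ⟨?_, ?_⟩, ?_⟩
  · rw [hcoord z hz, hq z hz, e, Pi.single_apply]
  · rw [hcoord z hz, hcoord z hz, hp z hz]
  -- The choice of point in the slice is immaterial, and the value off the projection is arbitrary.
  let C : (Fin d → ℝ) → (Fin d → ℝ) := fun p =>
    if h : ∃ q, (p, q) ∈ W then ψ (p, h.choose) - h.choose else 0
  have hC : ∀ p q, (p, q) ∈ W → C p = ψ (p, q) - q := fun p q h => by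
    have hex : ∃ q, (p, q) ∈ W := ⟨q, h⟩
    simp only [C, dif_pos hex]
    exact sub_snd_eq_of_fst_eq hWo hWc hdiff hq hex.choose_spec h
  have hloc : ∀ p q, (p, q) ∈ W → C =ᶠ[nhds p] fun x => ψ (x, q) - q := fun p q h => by
    have hO : IsOpen {x : Fin d → ℝ | (x, q) ∈ W} := hWo.preimage (by fun_prop)
    filter_upwards [hO.mem_nhds h] with x hx using hC x q hx
  refine ⟨C, ?_, ?_, fun z hz => ?_⟩
  · rintro _ ⟨⟨p, q⟩, hz, rfl⟩
    have h1 : ContDiffAt ℝ (⊤ : ℕ∞) (fun x => ψ (x, q) - q) p :=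
      ((hψ.contDiffAt (hWo.mem_nhds hz)).comp p
        (contDiffAt_id.prodMk contDiffAt_const)).sub contDiffAt_const
    exact (h1.congr_of_eventuallyEq (hloc p q hz)).contDiffWithinAt
  · rintro _ ⟨⟨p, q⟩, hz, rfl⟩ i j
    have h1 : HasFDerivAt C
        ((fderiv ℝ ψ (p, q)).comp (ContinuousLinearMap.inl ℝ (Fin d → ℝ) (Fin d → ℝ))) p :=
      ((((hdiff _ hz).hasFDerivAt).comp p (hasFDerivAt_prodMk_left p q)).sub_const
        q).congr_of_eventuallyEq (hloc p q hz)
    rw [fderiv_apply h1.differentiableAt, fderiv_apply h1.differentiableAt, h1.fderiv]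
    simpa using hp _ hz i j
  · rw [hC z.1 z.2 hz]
    simp
end
end
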